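/- arXiv:2004.04855 — 2 statements merged into one kernel-verified Lean document; each statement's English description precedes it below -/
import Mathlib

section
/- Let q be a prime number, k the algebraic closure of the field 𝔽_q with q elements, and let m ≥ 2, d ≥ 2 be integers with q ∤ d. Let a = (a_1, …, a_{m−1}) ∈ k^{m−1} and suppose the partial sums A_i = ∑_{k=i}^{m−1} a_k, for i = 1, …, m−1, are pairwise distinct and all nonzero. Then the ideal ⟨g_1, …, g_{m−1}⟩ generated by g_j = x_j^d − x_{j+1}^d − a_j, j = 1, …, m−1, is a prime ideal of k[x_1, …, x_m]. -/
open scoped BigOperators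

/-- The polynomial `g_j = x_j^d − x_{j+1}^d − a_j` (0-indexed). -/
noncomputable def gPoly {k : Type*} [CommRing k] (m d : ℕ) (a : Fin (m - 1) → k)
    (j : Fin (m - 1)) : MvPolynomial (Fin m) k :=
  MvPolynomial.X ⟨j.1, by have := j.isLt; omega⟩ ^ d -
    MvPolynomial.X ⟨j.1 + 1, by have := j.isLt; omega⟩ ^ d -
    MvPolynomial.C (a j)

/-- The partial sum `A_i = ∑_{k ≥ i} a_k`. -/
def partialSum {k : Type*} [AddCommMonoid k] {n : ℕ} (a : Fin n → k) (i : Fin n) : k :=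
  ∑ t ∈ Finset.Ici i, a t

/-!
The ideal is also generated by the relations `x_i ^ d = t ^ d + A_i` (`i = 1, …, m - 1`), where
`t = x_m` (`span_gPoly_eq`). These are adjoined to `k[t]` one at a time, and the quotient is shown
to remain a domain (`isPrime_span_fermatRel`). Let `D` be the domain obtained from all but one of
the relations, the remaining one being `x ^ d = f` with `f = t ^ d + c_0`. Choose `γ` with
`γ ^ d = -c_0`; it is nonzero, so it is a simple root of `f`, as `d` is invertible. Sending `t` to
`γ + X` and every other `x_i` to a `d`-th root of `(γ + X) ^ d + c_i`, which is a unit because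
`c_i ≠ c_0` (`exists_powerSeries_root`), defines a homomorphism `D → k⟦X⟧`. It is injective, since
it is injective on `k[t]` and `D` is a domain integral over `k[t]`
(`injective_of_injective_on_last`). The image of `f` is a uniformizer, so `Y ^ d - f` is
Eisenstein over `k⟦X⟧`, and therefore prime over `D` (`prime_X_pow_sub_C_of_uniformizer`).
-/

/-- A power series with nonzero constant term over an algebraically closed field in which `d` is
invertible has a `d`-th root, by Hensel's lemma. -/
lemma exists_powerSeries_root {k : Type*} [Field k] [IsAlgClosed k] {d : ℕ} (hdk : (d : k) ≠ 0)
    (u : PowerSeries k) (hu : PowerSeries.constantCoeff u ≠ 0) : ∃ r : PowerSeries k, r ^ d = u := by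
  have hd : d ≠ 0 := by rintro rfl; simp at hdk
  obtain ⟨b, hb⟩ := IsAlgClosed.exists_pow_nat_eq (PowerSeries.constantCoeff u)
    (Nat.pos_of_ne_zero hd)
  have hb0 : b ≠ 0 := by rintro rfl; rw [zero_pow hd] at hb; exact hu hb.symm
  obtain ⟨r, hr, -⟩ := HenselianRing.is_henselian (I := Ideal.span {(PowerSeries.X : PowerSeries k)})
    (Polynomial.X ^ d - Polynomial.C u) (Polynomial.monic_X_pow_sub_C u hd) (PowerSeries.C b)
    (by
      rw [Ideal.mem_span_singleton, PowerSeries.X_dvd_iff]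
      simp [hb])
    (by
      apply IsUnit.map
      rw [PowerSeries.isUnit_iff_constantCoeff]
      simp [Polynomial.derivative_X_pow, hdk, hb0])
  refine ⟨r, ?_⟩
  simpa [sub_eq_zero] using hr

/-- If a domain `D` embeds in `k⟦X⟧` so that `f` becomes a uniformizer, then `Y ^ d - f` is prime
in `D[Y]`: it is Eisenstein, hence prime, over the factorial ring `k⟦X⟧`, and divisibility by
a monic polynomial descends along the embedding. -/
lemma prime_X_pow_sub_C_of_uniformizer {k D : Type*} [Field k] [CommRing D]
    {d : ℕ} (hd : d ≠ 0) (ψ : D →+* PowerSeries k) (hψ : Function.Injective ψ) (f : D)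
    (h0 : PowerSeries.constantCoeff (ψ f) = 0) (h1 : PowerSeries.coeff 1 (ψ f) ≠ 0) :
    Prime (Polynomial.X ^ d - Polynomial.C f : Polynomial D) := by
  have hD : Nontrivial D := ψ.domain_nontrivial
  have hm : (Polynomial.X ^ d - Polynomial.C f : Polynomial D).Monic :=
    Polynomial.monic_X_pow_sub_C f hd
  have hmap : (Polynomial.X ^ d - Polynomial.C f : Polynomial D).map ψ
      = Polynomial.X ^ d - Polynomial.C (ψ f) := by simp
  have hm' := Polynomial.monic_X_pow_sub_C (ψ f) hd
  have hirr : Irreducible (Polynomial.X ^ d - Polynomial.C (ψ f)) := by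
    have hP : (Ideal.span {(PowerSeries.X : PowerSeries k)}).IsPrime :=
      (Ideal.span_singleton_prime PowerSeries.X_ne_zero).2 PowerSeries.X_prime
    refine Polynomial.irreducible_of_eisenstein_criterion hP ?_ ?_ ?_ ?_ hm'.isPrimitive
    · rw [hm'.leadingCoeff]
      exact fun h => hP.ne_top ((Ideal.eq_top_iff_one _).2 h)
    · intro n hn
      rw [Polynomial.degree_X_pow_sub_C (Nat.pos_of_ne_zero hd), Nat.cast_lt] at hn
      rw [Polynomial.coeff_sub, Polynomial.coeff_X_pow, if_neg hn.ne, zero_sub, neg_mem_iff,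
        Polynomial.coeff_C]
      split_ifs
      · rwa [Ideal.mem_span_singleton, PowerSeries.X_dvd_iff]
      · exact zero_mem _
    · rw [Polynomial.degree_X_pow_sub_C (Nat.pos_of_ne_zero hd)]
      exact_mod_cast Nat.pos_of_ne_zero hd
    · rw [Polynomial.coeff_sub, Polynomial.coeff_X_pow, if_neg hd.symm, zero_sub, neg_mem_iff,
        Polynomial.coeff_C_zero, Ideal.span_singleton_pow, Ideal.mem_span_singleton,
        PowerSeries.X_pow_dvd_iff]
      exact fun h => h1 (h 1 (by norm_num))
  have hp := hirr.prime
  rw [← hmap] at hp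
  refine ⟨hm.ne_zero, fun h => hp.not_isUnit (h.map (Polynomial.mapRingHom ψ)), fun a b hab => ?_⟩
  simp only [← Polynomial.map_dvd_map ψ hψ hm] at hab ⊢
  rw [Polynomial.map_mul] at hab
  exact hp.dvd_or_dvd hab

/-- The relation `x_i ^ d = t ^ d + c_i`, where the last variable plays the role of `t`. -/
noncomputable def fermatRel {k : Type*} [CommRing k] (d : ℕ) {n : ℕ} (c : Fin n → k) (i : Fin n) :
    MvPolynomial (Fin (n + 1)) k :=
  MvPolynomial.X i.castSucc ^ d - MvPolynomial.X (Fin.last n) ^ d - MvPolynomial.C (c i)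

lemma finSuccEquiv_fermatRel_zero {k : Type*} [CommRing k] (d : ℕ) {n : ℕ} (c : Fin (n + 1) → k) :
    MvPolynomial.finSuccEquiv k (n + 1) (fermatRel d c 0) = Polynomial.X ^ d -
      Polynomial.C (MvPolynomial.X (Fin.last n) ^ d + MvPolynomial.C (c 0)) := by
  rw [fermatRel, Fin.castSucc_zero, ← Fin.succ_last]
  have hC : MvPolynomial.finSuccEquiv k (n + 1) (MvPolynomial.C (c 0)) =
      Polynomial.C (MvPolynomial.C (c 0)) := by simp [MvPolynomial.finSuccEquiv_apply]
  simp only [map_sub, map_pow, map_add, MvPolynomial.finSuccEquiv_X_zero,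
    MvPolynomial.finSuccEquiv_X_succ, hC]
  ring

lemma finSuccEquiv_fermatRel_succ {k : Type*} [CommRing k] (d : ℕ) {n : ℕ} (c : Fin (n + 1) → k)
    (i : Fin n) :
    MvPolynomial.finSuccEquiv k (n + 1) (fermatRel d c i.succ) =
      Polynomial.C (fermatRel d (fun i => c i.succ) i) := by
  rw [fermatRel, fermatRel, ← Fin.succ_castSucc, ← Fin.succ_last]
  have hC : MvPolynomial.finSuccEquiv k (n + 1) (MvPolynomial.C (c i.succ)) =
      Polynomial.C (MvPolynomial.C (c i.succ)) := by simp [MvPolynomial.finSuccEquiv_apply]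
  simp only [map_sub, map_pow, MvPolynomial.finSuccEquiv_X_succ, hC]

/-- The coordinate ring cut out by the relations is integral over `k[t]`, so a homomorphism out of
it that is injective on `k[t]` is injective as soon as the coordinate ring is a domain. -/
lemma injective_of_injective_on_last {k S : Type*} [Field k] [CommRing S] {d n : ℕ} (hd : d ≠ 0)
    (c : Fin n → k) [(Ideal.span (Set.range (fermatRel d c))).IsPrime]
    (ψ : (MvPolynomial (Fin (n + 1)) k ⧸ Ideal.span (Set.range (fermatRel d c))) →+* S)
    (h : Function.Injective ((ψ.comp (Ideal.Quotient.mk _)).comp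
      (Polynomial.aeval (R := k) (MvPolynomial.X (Fin.last n) :
        MvPolynomial (Fin (n + 1)) k)).toRingHom)) :
    Function.Injective ψ := by
  set I := Ideal.span (Set.range (fermatRel d c)) with hI
  let ι : Polynomial k →+* (MvPolynomial (Fin (n + 1)) k ⧸ I) := (Ideal.Quotient.mk I).comp
      (Polynomial.aeval (R := k) (MvPolynomial.X (Fin.last n) :
        MvPolynomial (Fin (n + 1)) k)).toRingHom
  let _ : Algebra (Polynomial k) (MvPolynomial (Fin (n + 1)) k ⧸ I) := ι.toAlgebra
  have hC : ∀ a : k, Ideal.Quotient.mk I (MvPolynomial.C a) = algebraMap (Polynomial k) _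
      (Polynomial.C a) := by
    intro a
    change _ = Ideal.Quotient.mk I (Polynomial.aeval _ (Polynomial.C a))
    rw [Polynomial.aeval_C]; rfl
  have hX : Ideal.Quotient.mk I (MvPolynomial.X (Fin.last n)) = algebraMap (Polynomial k) _
      Polynomial.X := by
    change _ = Ideal.Quotient.mk I (Polynomial.aeval _ Polynomial.X)
    rw [Polynomial.aeval_X]
  have hint : Algebra.IsIntegral (Polynomial k) (MvPolynomial (Fin (n + 1)) k ⧸ I) := by
    refine ⟨fun y => ?_⟩
    obtain ⟨p, rfl⟩ := Ideal.Quotient.mk_surjective y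
    induction p using MvPolynomial.induction_on with
    | C a => rw [hC]; exact isIntegral_algebraMap
    | add p q hp hq => rw [map_add]; exact hp.add hq
    | mul_X p i hp =>
      rw [map_mul]
      refine hp.mul ?_
      induction i using Fin.lastCases with
      | last => rw [hX]; exact isIntegral_algebraMap
      | cast i =>
        refine IsIntegral.of_pow (Nat.pos_of_ne_zero hd) ?_
        have : Ideal.Quotient.mk I (MvPolynomial.X i.castSucc) ^ d
            = algebraMap (Polynomial k) _ (Polynomial.X ^ d + Polynomial.C (c i)) := by
          have h0 : Ideal.Quotient.mk I (fermatRel d c i) = 0 :=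
            Ideal.Quotient.eq_zero_iff_mem.2 (Ideal.subset_span ⟨i, rfl⟩)
          rw [fermatRel, map_sub, map_sub, map_pow, map_pow, hC, hX] at h0
          rw [map_add, map_pow]
          linear_combination h0
        rw [this]
        exact isIntegral_algebraMap
  rw [RingHom.injective_iff_ker_eq_bot]
  refine Ideal.eq_bot_of_comap_eq_bot (R := Polynomial k) ?_
  rw [eq_bot_iff]
  intro p hp
  rw [Ideal.mem_bot]
  apply h
  rw [map_zero]
  exact hp

lemma isPrime_of_prime_map {A B : Type*} [CommRing A] [CommRing B] (π : A →+* B)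
    (hπ : Function.Surjective π) {J : Ideal A} (hker : ∀ z, π z = 0 → z ∈ J) {g : A} (hg : g ∈ J)
    (hJ : J ≤ (Ideal.span {π g}).comap π) (hprime : Prime (π g)) : J.IsPrime := by
  have hspan : J = (Ideal.span {π g}).comap π := by
    refine le_antisymm hJ fun x hx => ?_
    obtain ⟨p, hp⟩ := Ideal.mem_span_singleton.1 (Ideal.mem_comap.1 hx)
    obtain ⟨y, rfl⟩ := hπ p
    have h1 := hker (x - g * y) (by rw [map_sub, map_mul, hp, sub_self])
    simpa using add_mem h1 (Ideal.mul_mem_right y _ hg)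
  rw [hspan]
  have := (Ideal.span_singleton_prime hprime.ne_zero).2 hprime
  exact Ideal.comap_isPrime _ _

/-- Adjoining `x_0` to the quotient `D` of the polynomial ring in the other variables by the
relations for `i ≠ 0`: the full ideal is the preimage, under the surjection onto `D[Y]`
sending `x_0` to `Y`, of the ideal generated by `Y ^ d - (t ^ d + c_0)`. -/
lemma isPrime_span_of_prime_X_pow_sub_C {k D : Type*} [CommRing k] [CommRing D] (d : ℕ) {n : ℕ}
    (c : Fin (n + 1) → k) (φ : MvPolynomial (Fin (n + 1)) k →+* D) (hφ : Function.Surjective φ)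
    (hφk : RingHom.ker φ = Ideal.span (Set.range (fermatRel d (fun i => c i.succ))))
    (hprime : Prime (Polynomial.X ^ d - Polynomial.C (φ
        (MvPolynomial.X (Fin.last n) ^ d + MvPolynomial.C (c 0))))) :
    (Ideal.span (Set.range (fermatRel d c))).IsPrime := by
  let π : MvPolynomial (Fin (n + 1 + 1)) k →+* Polynomial D :=
    (Polynomial.mapRingHom φ).comp (MvPolynomial.finSuccEquiv k (n + 1)).toRingEquiv.toRingHom
  have hπ0 : π (fermatRel d c 0) = Polynomial.X ^ d - Polynomial.C (φ
      (MvPolynomial.X (Fin.last n) ^ d + MvPolynomial.C (c 0))) := by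
    change Polynomial.mapRingHom _ (MvPolynomial.finSuccEquiv k (n + 1) _) = _
    rw [finSuccEquiv_fermatRel_zero]
    simp
  have hπs : ∀ i : Fin n, π (fermatRel d c i.succ) = 0 := by
    intro i
    change Polynomial.mapRingHom _ (MvPolynomial.finSuccEquiv k (n + 1) _) = _
    have hi : fermatRel d (fun i => c i.succ) i ∈ RingHom.ker φ :=
      hφk ▸ Ideal.subset_span (Set.mem_range_self i)
    rw [finSuccEquiv_fermatRel_succ, Polynomial.coe_mapRingHom, Polynomial.map_C,
      RingHom.mem_ker.1 hi, Polynomial.C_0]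
  have hπsurj : Function.Surjective π :=
    (Polynomial.map_surjective _ hφ).comp
      (MvPolynomial.finSuccEquiv k (n + 1)).surjective
  have hker : ∀ z, π z = 0 → z ∈ Ideal.span (Set.range (fermatRel d c)) := by
    intro z hz
    have hz' : MvPolynomial.finSuccEquiv k (n + 1) z ∈
        RingHom.ker (Polynomial.mapRingHom φ) := hz
    rw [Polynomial.ker_mapRingHom, hφk, Ideal.map_span] at hz'
    have hle : Ideal.span (⇑Polynomial.C '' Set.range (fermatRel d fun i => c i.succ)) ≤
        (Ideal.span (Set.range (fermatRel d c))).comap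
          (MvPolynomial.finSuccEquiv k (n + 1)).symm := by
      rw [Ideal.span_le]
      rintro _ ⟨_, ⟨i, rfl⟩, rfl⟩
      rw [← finSuccEquiv_fermatRel_succ, SetLike.mem_coe, Ideal.mem_comap,
        AlgEquiv.symm_apply_apply]
      exact Ideal.subset_span ⟨_, rfl⟩
    simpa using hle hz'
  rw [← hπ0] at hprime
  refine isPrime_of_prime_map π hπsurj hker (Ideal.subset_span ⟨0, rfl⟩) ?_ hprime
  rw [Ideal.span_le]
  rintro _ ⟨i, rfl⟩
  rw [SetLike.mem_coe, Ideal.mem_comap]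
  induction i using Fin.cases with
  | zero => exact Ideal.mem_span_singleton_self _
  | succ i => rw [hπs]; exact zero_mem _

/-- Adjoining the `x_i` one at a time keeps the coordinate ring a domain. For the inductive step,
expand in a local parameter at a point where `t ^ d + c_0` vanishes simply: the `t ^ d + c_i` with
`i ≠ 0` are units there, so the ring built so far embeds in `k⟦X⟧` and `t ^ d + c_0` becomes a
uniformizer. -/
lemma isPrime_span_fermatRel {k : Type*} [Field k] [IsAlgClosed k] {d : ℕ} (hdk : (d : k) ≠ 0) :
    ∀ {n : ℕ} (c : Fin n → k), Function.Injective c → (∀ i, c i ≠ 0) →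
      (Ideal.span (Set.range (fermatRel d c))).IsPrime := by
  have hd : d ≠ 0 := by rintro rfl; simp at hdk
  intro n
  induction n with
  | zero =>
    intro c _ _
    rw [Set.range_eq_empty, Ideal.span_empty]
    exact Ideal.isPrime_bot
  | succ n ih =>
    intro c hc hc0
    have hIp := ih (fun i => c i.succ) (fun i j hij => Fin.succ_injective _ (hc hij))
      (fun i => hc0 _)
    set I := Ideal.span (Set.range (fermatRel d (fun i => c i.succ))) with hI
    -- Expand at the point where `t ^ d + c 0` has a simple zero and the other `t ^ d + c i`
    -- do not vanish.
    obtain ⟨γ, hγ⟩ := IsAlgClosed.exists_pow_nat_eq (-c 0) (Nat.pos_of_ne_zero hd)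
    have hγ0 : γ ≠ 0 := by
      rintro rfl
      rw [zero_pow hd] at hγ
      exact hc0 0 (neg_eq_zero.1 hγ.symm)
    let t : PowerSeries k := PowerSeries.C γ + PowerSeries.X
    have hroot : ∀ i : Fin n, ∃ r : PowerSeries k, r ^ d = t ^ d + PowerSeries.C (c i.succ) := by
      intro i
      apply exists_powerSeries_root hdk
      have : c i.succ - c 0 ≠ 0 := sub_ne_zero.2 fun h => Fin.succ_ne_zero i (hc h)
      simpa [t, hγ, neg_add_eq_sub] using this
    choose r hr using hroot
    let e : MvPolynomial (Fin (n + 1)) k →+* PowerSeries k :=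
      MvPolynomial.eval₂Hom PowerSeries.C (Fin.lastCases t r)
    have heI : ∀ x ∈ I, e x = 0 := by
      intro x hx
      have : I ≤ RingHom.ker e := by
        rw [hI, Ideal.span_le]
        rintro _ ⟨i, rfl⟩
        simp [fermatRel, e, hr]
      exact this hx
    let ψ := Ideal.Quotient.lift I e heI
    have hψ : Function.Injective ψ := by
      refine injective_of_injective_on_last hd _ ψ ?_
      -- On `k[t]` the map is `p ↦ p(X + γ)`.
      have : ((ψ.comp (Ideal.Quotient.mk I)).comp
          (Polynomial.aeval (R := k) (MvPolynomial.X (Fin.last n) :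
            MvPolynomial (Fin (n + 1)) k)).toRingHom) =
          (Polynomial.coeToPowerSeries.ringHom (R := k)).comp
            (Polynomial.taylorAlgHom γ : Polynomial k →ₐ[k] Polynomial k).toRingHom := by
        apply Polynomial.ringHom_ext
        · intro a
          simp [ψ, e, MvPolynomial.algebraMap_eq]
        · simp [ψ, e, t, add_comm]
      rw [this]
      exact (Polynomial.coe_injective k).comp (Polynomial.taylor_injective γ)
    let f : MvPolynomial (Fin (n + 1)) k :=
      MvPolynomial.X (Fin.last n) ^ d + MvPolynomial.C (c 0)
    have hψf : ψ (Ideal.Quotient.mk I f) = t ^ d + PowerSeries.C (c 0) := by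
      simp [ψ, f, e]
    have hprime := prime_X_pow_sub_C_of_uniformizer hd ψ hψ (Ideal.Quotient.mk I f)
      (by rw [hψf]; simp [t, hγ])
      (by
        rw [hψf]
        have h1 : PowerSeries.coeff 1 (t ^ d) = d * γ ^ (d - 1) := by
          have := PowerSeries.coeff_derivative (t ^ d) 0
          rw [Derivation.leibniz_pow] at this
          simpa [t, PowerSeries.derivative_X, PowerSeries.derivative_C] using this.symm
        simp [h1, hdk, hγ0])
    exact isPrime_span_of_prime_X_pow_sub_C d c (Ideal.Quotient.mk I) Ideal.Quotient.mk_surjective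
      Ideal.mk_ker hprime

/-- `g_j` is the difference of the relations for `j` and `j + 1` (the latter being absent for the
last index), so both families generate the same ideal. -/
lemma span_gPoly_eq {k : Type*} [CommRing k] (d n : ℕ) (a : Fin n → k) :
    Ideal.span (Set.range (gPoly (n + 1) d a)) =
      Ideal.span (Set.range (fermatRel d (partialSum a))) := by
  have hg : ∀ i : Fin n, gPoly (n + 1) d a i = MvPolynomial.X i.castSucc ^ d -
      MvPolynomial.X i.succ ^ d - MvPolynomial.C (a i) := fun i => rfl
  -- In the top case the next variable is the last one; otherwise the difference is again a relation.
  have key : ∀ i : Fin n, (fermatRel d (partialSum a) i = gPoly (n + 1) d a i) ∨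
      ∃ j : Fin n, j.1 = i.1 + 1 ∧ fermatRel d (partialSum a) i =
        gPoly (n + 1) d a i + fermatRel d (partialSum a) j := by
    intro i
    have hs : partialSum a i = a i + ∑ t ∈ Finset.Ioi i, a t := by
      rw [partialSum, Finset.Ici_eq_cons_Ioi, Finset.sum_cons]
    by_cases h : i.1 + 1 < n
    · right
      refine ⟨⟨i.1 + 1, h⟩, rfl, ?_⟩
      have h2 : Finset.Ioi i = Finset.Ici ⟨i.1 + 1, h⟩ := by
        ext t
        simp only [Finset.mem_Ioi, Finset.mem_Ici, Fin.lt_def, Fin.le_def]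
        omega
      have h3 : (⟨i.1 + 1, h⟩ : Fin n).castSucc = i.succ := rfl
      rw [hg, fermatRel, fermatRel, hs, h2, h3, partialSum, map_add]
      ring
    · left
      have h2 : Finset.Ioi i = ∅ := by
        ext t
        have := t.isLt
        simp only [Finset.mem_Ioi, Fin.lt_def, Finset.notMem_empty, iff_false]
        omega
      have h3 : i.succ = Fin.last n := by
        ext
        have := i.isLt
        simp only [Fin.val_succ, Fin.val_last]
        omega
      rw [hg, fermatRel, hs, h2, h3, Finset.sum_empty, add_zero]
  apply le_antisymm <;> rw [Ideal.span_le]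
  · rintro _ ⟨i, rfl⟩
    rcases key i with h | ⟨j, -, h⟩
    · rw [← h]
      exact Ideal.subset_span ⟨i, rfl⟩
    · rw [eq_sub_of_add_eq h.symm]
      exact sub_mem (Ideal.subset_span ⟨i, rfl⟩) (Ideal.subset_span ⟨j, rfl⟩)
  · have main : ∀ (r : ℕ) (i : Fin n), n - i.1 = r → fermatRel d (partialSum a) i ∈
        Ideal.span (Set.range (gPoly (n + 1) d a)) := by
      intro r
      induction r with
      | zero => intro i hi; have := i.isLt; omega
      | succ r ih =>
        intro i hi
        have hgi : gPoly (n + 1) d a i ∈ Ideal.span (Set.range (gPoly (n + 1) d a)) :=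
          Ideal.subset_span ⟨i, rfl⟩
        rcases key i with h | ⟨j, hj, h⟩
        · rw [h]
          exact hgi
        · rw [h]
          exact add_mem hgi (ih j (by omega))
    rintro _ ⟨i, rfl⟩
    exact main _ i rfl

theorem statement4 (q : ℕ) [Fact q.Prime] (m d : ℕ) (hm : 2 ≤ m) (hd : 2 ≤ d)
    (hqd : ¬ q ∣ d) (a : Fin (m - 1) → AlgebraicClosure (ZMod q))
    (hinj : Function.Injective (partialSum a))
    (hne : ∀ i, partialSum a i ≠ 0) :
    (Ideal.span (Set.range (gPoly m d a))).IsPrime := by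
  obtain ⟨n, rfl⟩ : ∃ n, m = n + 1 := ⟨m - 1, by omega⟩
  change Fin n → _ at a
  have hdk : (d : AlgebraicClosure (ZMod q)) ≠ 0 := by
    rwa [Ne, CharP.cast_eq_zero_iff (AlgebraicClosure (ZMod q)) q]
  rw [span_gPoly_eq]
  exact isPrime_span_fermatRel hdk (partialSum a) hinj hne
end

section
/- Let m ≥ 2, d ≥ 2 be integers and let δ > 0, ε > 0. There exists a constant C = C(m, d, ε) > 0 with the following property: for every positive integer q whose squarefree part satisfies q̃ ≥ q^{1−δ}, every integer b coprime to q, every a ∈ ℤ^{m−1}, and every unitary divisor c of q (i.e., c | q and gcd(c, q/c) = 1), one has |A(d, a, c)| ≤ C · c^{1/2+ε} · gcd(c, D(a))^{1/2} · q^{2δm}. -/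
/-!
The product defining `A(d, a, c)` splits into the primes with `p ‖ c` and the prime powers `p^e ‖ c`
with `e ≥ 2`. As `c` is a unitary divisor of `q`, the exponents are those of `q = q̃ v²`, so the
square-full part of `c` is at most `v³` (`prod_squarefull_le`). The trivial bound `|ν - p^e| ≤ p^{em}`
therefore contributes at most `v^{3m}`, and `v² = q / q̃ ≤ q^δ` makes this at most `q^{2δm}`.

At a prime `p ‖ c` the bound is `|ν - p| ≤ C √p · gcd(p, D(a))^{1/2}` (`prime_bound`); the
constants multiply to `C^{ω(c)} = O(c^ε)` (`pow_card_primeFactors_le`). If `p ∣ D(a)` the trivial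
bound `O(p)` suffices. Otherwise `ν` counts, over all `t`, the solutions of `b xᵢ^d = t + sᵢ` with
distinct shifts `sᵢ`, and `ν = p + O(√p)` (`weil`) is an instance of the Riemann hypothesis for
curves over finite fields. It is proved here by Stepanov's method.

For `e = gcd(p - 1, d)` and `N = (p - 1) / e`, solubility in `x` fixes the values `(t + sᵢ)^N`. Let
`Z` be the set of `t` at which they are prescribed roots of unity. The auxiliary polynomial is
`∑ h_{jk} X^{jp} ∏ᵢ (X + sᵢ)^{N kᵢ}` with `0 ≤ kᵢ < e`. On `Z` its derivatives coincide with
polynomials of low degree, so linear algebra makes it vanish there to order about `√p` (`stepanov`).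
It is not identically zero: the products `Y = ∏ᵢ (X + sᵢ)^{N kᵢ}` solve first-order differential
equations `F Y' = G Y`, which allows a Wronskian-like elimination from any relation between them
(`independence_mod`), and the elimination never degenerates because the local exponents `N kᵢ` at
`-sᵢ` are far apart modulo `p` (`separation`). Counting zeros gives `|Z| ≤ p / e^m + O(√p)`
(`card_cosetSet_le`). As the sets `Z` for the `e^m` choices of prescribed values cover all but `m`
elements of the field, these upper bounds imply the matching lower bound (`cover`).
-/

open scoped BigOperators

/-- Extension of `a : Fin (m−1) → ℤ` by zero to all of `ℕ` (0-indexed). -/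
def aseq (m : ℕ) (a : Fin (m - 1) → ℤ) (t : ℕ) : ℤ :=
  if h : t < m - 1 then a ⟨t, h⟩ else 0

/-- `σ_{ij}(a) = ∑_{k=i}^{j-1} a_k` (0-indexed: the sum of `a_t` for `i ≤ t < j`). -/
def sigmaSum (m : ℕ) (a : Fin (m - 1) → ℤ) (i j : ℕ) : ℤ :=
  ∑ t ∈ Finset.Ico i j, aseq m a t

/-- `D(a) = ∏_{1 ≤ i < j ≤ m} σ_{ij}(a)`. -/
def Dprod (m : ℕ) (a : Fin (m - 1) → ℤ) : ℤ :=
  ∏ p ∈ Finset.univ.filter (fun p : Fin m × Fin m => p.1 < p.2),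
    sigmaSum m a p.1.1 p.2.1

/-- `ν(d, a, c) = #{x ∈ (ℤ/cℤ)^m : b x_i^d − b x_{i+1}^d = a_i, 1 ≤ i ≤ m−1}`. -/
noncomputable def nuCount (m d : ℕ) (b : ℤ) (c : ℕ) (a : Fin (m - 1) → ℤ) : ℕ :=
  Nat.card {x : Fin m → ZMod c //
    ∀ i : Fin (m - 1),
      (b : ZMod c) * x ⟨i.1, by have := i.isLt; omega⟩ ^ d -
        (b : ZMod c) * x ⟨i.1 + 1, by have := i.isLt; omega⟩ ^ d = ((a i : ℤ) : ZMod c)}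

/-- `A(d, a, c) = ∏_{p^e ∥ c} (ν(d, a, p^e) − p^e)`, with `A(d, a, 1) = 1`. -/
noncomputable def Acoef (m d : ℕ) (b : ℤ) (c : ℕ) (a : Fin (m - 1) → ℤ) : ℤ :=
  ∏ p ∈ c.primeFactors,
    ((nuCount m d b (p ^ (c.factorization p)) a : ℤ) - (p : ℤ) ^ (c.factorization p))

/-- `r_eff(a, p)`: the number of distinct components of a solution `y` of
`y_i − y_{i+1} = a_i (mod p)`, computed from the canonical solution `y_i = σ_{i,m}(a)`. -/
def reff (m : ℕ) (p : ℕ) (a : Fin (m - 1) → ℤ) : ℕ :=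
  (Finset.image (fun i : Fin m => ((sigmaSum m a i.1 (m - 1) : ℤ) : ZMod p))
    Finset.univ).card

namespace Stepanov

open Polynomial

section PrimeField

variable {p : ℕ} [Fact p.Prime] {m : ℕ}

/-! ### Products of linear factors and their local exponents -/

/-- `F = ∏ᵢ (X + sᵢ)`, a common denominator for the logarithmic derivatives of all the products
`∏ᵢ (X + sᵢ)^{nᵢ}`. -/
noncomputable def Fpoly (s : Fin m → ZMod p) : (ZMod p)[X] := ∏ i, (X + C (s i))

/-- `G_w = ∑ᵢ wᵢ ∏_{l ≠ i} (X + s_l)`, that is, `F · ∑ᵢ wᵢ / (X + sᵢ)` with the denominator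
cleared. -/
noncomputable def Gpoly (s : Fin m → ZMod p) (w : Fin m → ZMod p) : (ZMod p)[X] :=
  ∑ i, C (w i) * ∏ l ∈ Finset.univ.erase i, (X + C (s l))

lemma natDegree_Fpoly (s : Fin m → ZMod p) : (Fpoly s).natDegree ≤ m := by
  refine (natDegree_prod_le _ _).trans ?_
  simp

lemma natDegree_Gpoly (s w : Fin m → ZMod p) : (Gpoly s w).natDegree ≤ m := by
  refine natDegree_sum_le_of_forall_le _ _ fun i _ => ?_
  refine (natDegree_C_mul_le _ _).trans ((natDegree_prod_le _ _).trans ?_)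
  simp

lemma Gpoly_sub (s w w' : Fin m → ZMod p) : Gpoly s w - Gpoly s w' = Gpoly s (w - w') := by
  simp [Gpoly, ← Finset.sum_sub_distrib, sub_mul]

lemma Fpoly_eq (s : Fin m → ZMod p) (i : Fin m) :
    Fpoly s = (X + C (s i)) * ∏ l ∈ Finset.univ.erase i, (X + C (s l)) :=
  (Finset.mul_prod_erase _ _ (Finset.mem_univ i)).symm

/-- The first-order equation `F Y' = G_n Y` satisfied by `Y = ∏ᵢ (X + sᵢ)^{nᵢ}`. -/
lemma Fpoly_mul_derivative (s : Fin m → ZMod p) (n : Fin m → ℕ) :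
    Fpoly s * derivative (∏ i, (X + C (s i)) ^ n i) =
      Gpoly s (fun i => (n i : ZMod p)) * ∏ i, (X + C (s i)) ^ n i := by
  rw [derivative_prod_finset, Finset.mul_sum, Gpoly, Finset.sum_mul]
  refine Finset.sum_congr rfl fun i _ => ?_
  rw [Fpoly_eq s i, ← Finset.mul_prod_erase _ _ (Finset.mem_univ i)]
  rcases Nat.eq_zero_or_pos (n i) with h | h
  · simp [h]
  · obtain ⟨k, hk⟩ : ∃ k, n i = k + 1 := ⟨n i - 1, by omega⟩
    simp only [hk, derivative_X_add_C_pow, Nat.add_sub_cancel]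
    simp only [map_natCast]
    ring

/-- Comparison of local exponents. The hypothesis says that `v/u` satisfies the first-order equation
`F (v/u)' = -G_w (v/u)`, whose exponent at its singular point `-sᵢ` is `-wᵢ`; so the order of `v/u`
there, read modulo `p`, is `-wᵢ`. -/
lemma local_exponent (s w : Fin m → ZMod p) (hs : Function.Injective s) (u v : (ZMod p)[X])
    (hu : u ≠ 0) (hv : v ≠ 0)
    (h : Fpoly s * (u * derivative v - derivative u * v) + u * v * Gpoly s w = 0) (i : Fin m) :
    ((v.rootMultiplicity (-s i) : ℕ) : ZMod p) - (u.rootMultiplicity (-s i) : ℕ) + w i = 0 := by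
  obtain ⟨u1, hu1, hu2⟩ := exists_eq_pow_rootMultiplicity_mul_and_not_dvd u hu (-s i)
  obtain ⟨v1, hv1, hv2⟩ := exists_eq_pow_rootMultiplicity_mul_and_not_dvd v hv (-s i)
  set a := u.rootMultiplicity (-s i)
  set b := v.rootMultiplicity (-s i)
  have hL : (X - C (-s i) : (ZMod p)[X]) = X + C (s i) := by simp
  rw [dvd_iff_isRoot, IsRoot.def] at hu2 hv2
  rw [hL] at hu1 hv1
  set L : (ZMod p)[X] := X + C (s i) with hLdef
  set F1 := ∏ l ∈ Finset.univ.erase i, (X + C (s l)) with hF1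
  have hF1e : F1.eval (-s i) ≠ 0 := by
    rw [hF1, eval_prod, Finset.prod_ne_zero_iff]
    intro l hl
    simp only [eval_add, eval_X, eval_C]
    intro h0
    exact (Finset.mem_erase.mp hl).1 (hs (by linear_combination h0))
  have hG : ∃ H, Gpoly s w = C (w i) * F1 + L * H := by
    have : L ∣ Gpoly s w - C (w i) * F1 := by
      rw [Gpoly, ← Finset.add_sum_erase _ _ (Finset.mem_univ i), add_sub_cancel_left]
      refine Finset.dvd_sum fun l hl => Dvd.dvd.mul_left ?_ _
      exact Finset.dvd_prod_of_mem _ (Finset.mem_erase.mpr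
        ⟨(Finset.mem_erase.mp hl).1.symm, Finset.mem_univ i⟩)
    obtain ⟨H, hH⟩ := this
    exact ⟨H, by rw [← hH]; ring⟩
  obtain ⟨H, hH⟩ := hG
  have key : ∀ (n : ℕ) (z : (ZMod p)[X]),
      L * derivative (L ^ n * z) = L ^ n * ((n : (ZMod p)[X]) * z + L * derivative z) := by
    intro n z
    rw [derivative_mul, hLdef, derivative_X_add_C_pow]
    rcases n with _ | n
    · simp
    · simp only [Nat.add_sub_cancel, map_natCast]; ring
  have hu' := key a u1
  have hv' := key b v1
  rw [← hu1] at hu'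
  rw [← hv1] at hv'
  have e2 : L ^ (a + b) * (F1 * (u1 * ((b : (ZMod p)[X]) * v1 + L * derivative v1)
      - ((a : (ZMod p)[X]) * u1 + L * derivative u1) * v1)
      + u1 * v1 * (C (w i) * F1 + L * H)) = 0 := by
    rw [← h, hH, Fpoly_eq s i, ← hF1, ← hLdef]
    have : L * F1 * (u * derivative v - derivative u * v) =
      F1 * (u * (L * derivative v) - (L * derivative u) * v) := by ring
    rw [this, hu', hv', pow_add]
    linear_combination
      (-(F1 * (L ^ b * ((b : (ZMod p)[X]) * v1 + L * derivative v1)))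
        - v * (C (w i) * F1 + L * H)) * hu1
      + (F1 * (L ^ a * ((a : (ZMod p)[X]) * u1 + L * derivative u1))
        - L ^ a * u1 * (C (w i) * F1 + L * H)) * hv1
  have hLne : L ^ (a + b) ≠ 0 := pow_ne_zero _ (X_add_C_ne_zero _)
  have e3 := (mul_eq_zero.mp e2).resolve_left hLne
  have e4 := congrArg (eval (-s i)) e3
  have hLe : L.eval (-s i) = 0 := by simp [hLdef]
  simp only [eval_add, eval_mul, eval_sub, hLe, eval_natCast, eval_C, eval_zero] at e4
  have e5 : F1.eval (-s i) * (u1.eval (-s i) * v1.eval (-s i)) * ((b : ZMod p) - a + w i) = 0 := by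
    linear_combination e4
  exact (mul_eq_zero.mp e5).resolve_left (mul_ne_zero hF1e (mul_ne_zero hu2 hv2))

lemma rootMultiplicity_le_natDegree' (u : (ZMod p)[X]) (x : ZMod p) :
    u.rootMultiplicity x ≤ u.natDegree := by
  rw [← count_roots]
  exact (Multiset.count_le_card _ _).trans (card_roots' u)

/-- The nonvanishing on which the elimination in `independence_mod` rests. If the combination
vanished for some `k ≠ l`, `local_exponent` would make `N (kᵢ - lᵢ)` congruent modulo `p` to a
difference of two root multiplicities, hence to an integer of absolute value at most `D`. Since
`N d ≡ -1`, multiplying by `d` turns this into a congruence between integers too small to be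
congruent without being equal, and then `d ∣ kᵢ - lᵢ` forces `kᵢ = lᵢ` for every `i`. -/
lemma separation {d N : ℕ} (hN : N * d = p - 1) (s : Fin m → ZMod p) (hs : Function.Injective s)
    {D : ℕ} (hD : d * (D + 1) < p) (k l : Fin m → Fin d) (hkl : k ≠ l) (u v : (ZMod p)[X])
    (hu : u ≠ 0) (hv : v ≠ 0) (huD : u.natDegree ≤ D) (hvD : v.natDegree ≤ D) :
    Fpoly s * (u * derivative v - derivative u * v) + u * v *
      (Gpoly s (fun i => ((N * (k i : ℕ) : ℕ) : ZMod p)) -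
        Gpoly s (fun i => ((N * (l i : ℕ) : ℕ) : ZMod p))) ≠ 0 := by
  intro h
  rw [Gpoly_sub] at h
  obtain ⟨i, hi⟩ := Function.ne_iff.mp hkl
  have e := local_exponent s _ hs u v hu hv h i
  have hp := (Fact.out : p.Prime).two_le
  have ha : u.rootMultiplicity (-s i) ≤ D := (rootMultiplicity_le_natDegree' u _).trans huD
  have hb : v.rootMultiplicity (-s i) ≤ D := (rootMultiplicity_le_natDegree' v _).trans hvD
  set a := u.rootMultiplicity (-s i)
  set b := v.rootMultiplicity (-s i)
  have hNd : (N : ZMod p) * d = -1 := by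
    have : ((N * d + 1 : ℕ) : ZMod p) = 0 := by
      rw [hN, Nat.sub_add_cancel (by omega)]; simp
    push_cast at this
    linear_combination this
  have hz : (((d : ℤ) * ((b : ℤ) - a) - ((k i : ℕ) - (l i : ℕ) : ℤ) : ℤ) : ZMod p) = 0 := by
    push_cast
    simp only [Pi.sub_apply, Nat.cast_mul] at e
    linear_combination (d : ZMod p) * e - (((k i : ℕ) : ZMod p) - ((l i : ℕ) : ZMod p)) * hNd
  rw [ZMod.intCast_zmod_eq_zero_iff_dvd] at hz
  have hk := (k i).isLt
  have hl := (l i).isLt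
  have h0 : (d : ℤ) * ((b : ℤ) - a) - ((k i : ℕ) - (l i : ℕ) : ℤ) = 0 := by
    refine Int.eq_zero_of_abs_lt_dvd hz ?_
    have h1 : (d : ℤ) * ((b : ℤ) - a) ≤ d * D := by gcongr; omega
    have h2 : (d : ℤ) * (-D) ≤ (d : ℤ) * ((b : ℤ) - a) := by gcongr; omega
    have h3 : (d : ℤ) * (D + 1) < p := by exact_mod_cast hD
    rw [abs_lt]
    constructor <;> nlinarith
  have h1 : (d : ℤ) ∣ ((k i : ℕ) - (l i : ℕ) : ℤ) := ⟨(b : ℤ) - a, by linarith⟩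
  have h2 := Int.eq_zero_of_abs_lt_dvd h1 (by rw [abs_lt]; constructor <;> omega)
  exact hi (Fin.ext (by omega))

/-! ### Independence of the products -/

lemma X_pow_dvd_of_mul {n : ℕ} {y z : (ZMod p)[X]} (hy : y.eval 0 ≠ 0) (h : X ^ n ∣ y * z) :
    X ^ n ∣ z := by
  refine (IsCoprime.pow_left ?_).dvd_of_dvd_mul_left h
  refine (Polynomial.prime_X.irreducible.coprime_iff_not_dvd).mpr ?_
  rwa [X_dvd_iff, coeff_zero_eq_eval_zero]

/-- Independence of the `Y_k` modulo a power of `X`, over coefficients of small degree. Combining the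
relation `E = ∑ h_k Y_k` with its derivative eliminates the index `k0`:
`F (h_{k0} Y_{k0}) E' - F (h_{k0} Y_{k0})' E = Y_{k0} ∑_{k ≠ k0} h'_k Y_k`. The new coefficients
`h'_k` have degree at most `2 B + m`, only one power of `X` is lost, and by `hsep` the `h'_k` vanish
only if the `h_k` do. After `t` eliminations nothing is left, which explains the factor `2 ^ t`. -/
lemma independence_mod {ι : Type*} [DecidableEq ι] (F : (ZMod p)[X]) (G Y : ι → (ZMod p)[X])
    (hF : F.natDegree ≤ m) (hG : ∀ k, (G k).natDegree ≤ m) (hY : ∀ k, (Y k).eval 0 ≠ 0)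
    (hFY : ∀ k, F * derivative (Y k) = G k * Y k) (D : ℕ)
    (hsep : ∀ k l, k ≠ l → ∀ u v : (ZMod p)[X], u ≠ 0 → v ≠ 0 → u.natDegree ≤ D →
      v.natDegree ≤ D → F * (u * derivative v - derivative u * v) + u * v * (G k - G l) ≠ 0)
    (t : ℕ) : ∀ (S : Finset ι), S.card = t → ∀ (B n : ℕ) (h : ι → (ZMod p)[X]),
      (∀ k ∈ S, (h k).natDegree ≤ B) → X ^ n ∣ ∑ k ∈ S, h k * Y k →
      2 ^ t * (B + m) + t ≤ n → 2 ^ t * (B + m) ≤ D → ∀ k ∈ S, h k = 0 := by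
  induction t with
  | zero =>
    intro S hS B n h _ _ _ _ k hk
    rw [Finset.card_eq_zero] at hS
    simp [hS] at hk
  | succ t ih =>
    intro S hS B n h hB hdvd hn hD
    by_contra! hne
    obtain ⟨k0, hk0, h0⟩ := hne
    obtain ⟨n, rfl⟩ : ∃ n', n = n' + 1 := ⟨n - 1, by omega⟩
    set E := ∑ k ∈ S, h k * Y k with hE
    let h' : ι → (ZMod p)[X] := fun k =>
      F * (h k0 * derivative (h k) - derivative (h k0) * h k) + h k0 * h k * (G k - G k0)
    have hBD : B ≤ D := by
      have : 1 ≤ 2 ^ (t + 1) := Nat.one_le_two_pow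
      nlinarith
    have hEd : derivative E = ∑ k ∈ S, (derivative (h k) * Y k + h k * derivative (Y k)) := by
      rw [hE, derivative_sum]
      simp only [derivative_mul]
    have hW : F * (h k0 * Y k0) * derivative E - F * derivative (h k0 * Y k0) * E =
        Y k0 * ∑ k ∈ S.erase k0, h' k * Y k := by
      have h1 : ∑ k ∈ S.erase k0, h' k * Y k = ∑ k ∈ S, h' k * Y k := by
        rw [← Finset.add_sum_erase S _ hk0]
        simp [h', mul_comm]
      rw [h1, hEd, hE, Finset.mul_sum, Finset.mul_sum, Finset.mul_sum, ← Finset.sum_sub_distrib]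
      refine Finset.sum_congr rfl fun k _ => ?_
      simp only [h', derivative_mul]
      linear_combination (h k0 * Y k0 * h k) * hFY k - (h k0 * h k * Y k) * hFY k0
    have hdE : X ^ n ∣ derivative E := by
      obtain ⟨R, hR⟩ := hdvd
      rw [hR, derivative_mul]
      refine dvd_add (Dvd.dvd.mul_right ?_ _) (Dvd.dvd.mul_right (pow_dvd_pow _ n.le_succ) _)
      rw [derivative_X_pow]
      simp
    have hdvd' : X ^ n ∣ ∑ k ∈ S.erase k0, h' k * Y k := by
      refine X_pow_dvd_of_mul (hY k0) ?_
      rw [← hW]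
      exact dvd_sub (Dvd.dvd.mul_left hdE _)
        (Dvd.dvd.mul_left ((pow_dvd_pow _ n.le_succ).trans hdvd) _)
    have hdeg' : ∀ k ∈ S.erase k0, (h' k).natDegree ≤ 2 * B + m := by
      intro k hk
      have hk1 := hB k (Finset.mem_of_mem_erase hk)
      have hk2 := hB k0 hk0
      have e1 := natDegree_derivative_le (h k)
      have e2 := natDegree_derivative_le (h k0)
      refine (natDegree_add_le _ _).trans (max_le ?_ ?_)
      · refine natDegree_mul_le.trans ?_
        have := (natDegree_sub_le (h k0 * derivative (h k)) (derivative (h k0) * h k)).trans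
          (max_le (natDegree_mul_le.trans (show _ ≤ 2 * B by omega))
            (natDegree_mul_le.trans (show _ ≤ 2 * B by omega)))
        omega
      · refine natDegree_mul_le.trans ?_
        have e3 : (h k0 * h k).natDegree ≤ 2 * B := natDegree_mul_le.trans (by omega)
        have e4 := (natDegree_sub_le (G k) (G k0)).trans (max_le (hG k) (hG k0))
        omega
    have hpow : 2 ^ t * (2 * B + m + m) = 2 ^ (t + 1) * (B + m) := by ring
    have hz := ih (S.erase k0) (by rw [Finset.card_erase_of_mem hk0, hS]; rfl) (2 * B + m) n h'
      hdeg' hdvd' (by omega) (by omega)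
    have hzero : ∀ k ∈ S.erase k0, h k = 0 := by
      intro k hk
      by_contra hk0'
      exact hsep k k0 (Finset.ne_of_mem_erase hk) (h k0) (h k) h0 hk0' ((hB k0 hk0).trans hBD)
        ((hB k (Finset.mem_of_mem_erase hk)).trans hBD) (hz k hk)
    have hE1 : E = Y k0 * h k0 := by
      rw [hE, ← Finset.add_sum_erase S _ hk0, Finset.sum_eq_zero, add_zero, mul_comm]
      intro k hk
      rw [hzero k hk, zero_mul]
    rw [hE1] at hdvd
    have := natDegree_le_of_dvd (X_pow_dvd_of_mul (hY k0) hdvd) h0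
    rw [natDegree_X_pow] at this
    have h3 := hB k0 hk0
    have : 1 ≤ 2 ^ (t + 1) := Nat.one_le_two_pow
    nlinarith

/-- Independence of the products `X^{jp} Y_k` over coefficients of degree at most `B`: modulo `X^p`
only `j = 0` survives, so `independence_mod` removes these terms, and the rest is divisible by
`X^p`. -/
lemma independence {ι : Type*} [Fintype ι] [DecidableEq ι] (F : (ZMod p)[X])
    (G Y : ι → (ZMod p)[X])
    (hF : F.natDegree ≤ m) (hG : ∀ k, (G k).natDegree ≤ m) (hY : ∀ k, (Y k).eval 0 ≠ 0)
    (hFY : ∀ k, F * derivative (Y k) = G k * Y k) (D : ℕ)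
    (hsep : ∀ k l, k ≠ l → ∀ u v : (ZMod p)[X], u ≠ 0 → v ≠ 0 → u.natDegree ≤ D →
      v.natDegree ≤ D → F * (u * derivative v - derivative u * v) + u * v * (G k - G l) ≠ 0)
    (B : ℕ) (hBp : 2 ^ Fintype.card ι * (B + m) + Fintype.card ι ≤ p)
    (hBD : 2 ^ Fintype.card ι * (B + m) ≤ D) (J : ℕ) :
    ∀ h : ℕ → ι → (ZMod p)[X], (∀ j k, (h j k).natDegree ≤ B) →
      ∑ j ∈ Finset.range J, ∑ k, h j k * X ^ (j * p) * Y k = 0 → ∀ j < J, ∀ k, h j k = 0 := by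
  induction J with
  | zero => intro h _ _ j hj; omega
  | succ J ih =>
    intro h hB hsum
    rw [Finset.sum_range_succ'] at hsum
    have h1 : ∑ j ∈ Finset.range J, ∑ k, h (j + 1) k * X ^ ((j + 1) * p) * Y k =
        X ^ p * ∑ j ∈ Finset.range J, ∑ k, h (j + 1) k * X ^ (j * p) * Y k := by
      simp only [Finset.mul_sum]
      refine Finset.sum_congr rfl fun j _ => Finset.sum_congr rfl fun k _ => ?_
      rw [add_mul, pow_add]; ring
    rw [h1] at hsum
    simp only [zero_mul, pow_zero, mul_one] at hsum
    have h0 : ∀ k, h 0 k = 0 := by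
      intro k
      refine independence_mod F G Y hF hG hY hFY D hsep _ Finset.univ rfl B p (h 0)
        (fun k _ => hB 0 k) ?_ hBp hBD k (Finset.mem_univ k)
      exact ⟨-∑ j ∈ Finset.range J, ∑ k, h (j + 1) k * X ^ (j * p) * Y k,
        by linear_combination hsum⟩
    simp only [h0, zero_mul, Finset.sum_const_zero, add_zero] at hsum
    have h2 := (mul_eq_zero.mp hsum).resolve_left (pow_ne_zero _ X_ne_zero)
    intro j hj k
    rcases j with _ | j
    · exact h0 k
    · exact ih (fun j => h (j + 1)) (fun j k => hB _ k) h2 j (by omega) k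

/-! ### Stepanov's method -/

/-- The operators with `F^ℓ (h Z Y)^{(ℓ)} = (hop F G ℓ h) Z Y` whenever `F Y' = G Y` and `Z' = 0`
(see `hop_spec`), given by `h ↦ F h' + (G - ℓ F') h` at each step. They are bundled as linear maps
because the vanishing conditions of `stepanov` are linear in the unknown coefficients. -/
noncomputable def hop (F G : (ZMod p)[X]) : ℕ → (ZMod p)[X] →ₗ[ZMod p] (ZMod p)[X]
  | 0 => LinearMap.id
  | ℓ + 1 => LinearMap.mulLeft (ZMod p) F ∘ₗ derivative ∘ₗ hop F G ℓ +
      LinearMap.mulLeft (ZMod p) (G - (ℓ : (ZMod p)[X]) * derivative F) ∘ₗ hop F G ℓ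

lemma hop_succ (F G h : (ZMod p)[X]) (ℓ : ℕ) : hop F G (ℓ + 1) h =
    F * derivative (hop F G ℓ h) + (G - (ℓ : (ZMod p)[X]) * derivative F) * hop F G ℓ h := rfl

lemma natDegree_hop {F G : (ZMod p)[X]} (hF : F.natDegree ≤ m) (hG : G.natDegree ≤ m)
    (h : (ZMod p)[X]) (ℓ : ℕ) : (hop F G ℓ h).natDegree ≤ h.natDegree + ℓ * m := by
  induction ℓ with
  | zero => simp [hop]
  | succ ℓ ih =>
    rw [hop_succ]
    have e1 := natDegree_derivative_le (hop F G ℓ h)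
    have e2 := natDegree_derivative_le F
    have e3 : ((ℓ : (ZMod p)[X]) * derivative F).natDegree ≤ m :=
      natDegree_mul_le.trans (by rw [natDegree_natCast]; omega)
    have e4 := (natDegree_sub_le G ((ℓ : (ZMod p)[X]) * derivative F)).trans (max_le hG e3)
    have e5 : (ℓ + 1) * m = ℓ * m + m := by ring
    refine (natDegree_add_le _ _).trans (max_le ?_ ?_) <;>
    · refine natDegree_mul_le.trans ?_
      omega

/-- Derivatives of `h Z Y` are again multiples of `Z Y`, with a coefficient of controlled degree; here
`Z` will be a `p`-th power. -/
lemma hop_spec {F G Y Z : (ZMod p)[X]} (hFY : F * derivative Y = G * Y) (hZ : derivative Z = 0)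
    (h : (ZMod p)[X]) (ℓ : ℕ) :
    F ^ ℓ * derivative^[ℓ] (h * Z * Y) = hop F G ℓ h * Z * Y := by
  induction ℓ with
  | zero => simp [hop]
  | succ ℓ ih =>
    rw [Function.iterate_succ_apply', hop_succ]
    set E := derivative^[ℓ] (h * Z * Y)
    have e := congrArg derivative ih
    simp only [derivative_mul, hZ, mul_zero, add_zero] at e
    have e1 : F * derivative (F ^ ℓ) = (ℓ : (ZMod p)[X]) * F ^ ℓ * derivative F := by
      rcases ℓ with _ | ℓ
      · simp
      · rw [derivative_pow_succ]
        simp only [map_add, map_natCast, map_one, Nat.cast_add, Nat.cast_one]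
        ring
    linear_combination F * e - e1 * E - (ℓ : (ZMod p)[X]) * derivative F * ih +
      (hop F G ℓ h * Z) * hFY

/-- Stepanov's method. Let all `Y_k` take constant values `γ_k` on the set `Z`. Consider
`E = ∑_{j < J} ∑_k h_{jk} X^{jp} Y_k` with unknown `h_{jk}` of degree less than `B`. On `Z` one has
`t^{jp} = t^j`, so the values of `F^ℓ E^{(ℓ)}` agree with those of a polynomial of degree less than
`B + M m + J`; making these zero for `ℓ < M` is a homogeneous linear system, solvable nontrivially
by `hcount`. By `independence` the resulting `E` is nonzero, and it vanishes to order at least `M` on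
`Z`, so `|Z| M ≤ deg E`. -/
lemma stepanov {ι : Type*} [Fintype ι] [DecidableEq ι] (F : (ZMod p)[X])
    (G Y : ι → (ZMod p)[X])
    (hF : F.natDegree ≤ m) (hG : ∀ k, (G k).natDegree ≤ m) (hY : ∀ k, (Y k).eval 0 ≠ 0)
    (hFY : ∀ k, F * derivative (Y k) = G k * Y k) (D : ℕ)
    (hsep : ∀ k l, k ≠ l → ∀ u v : (ZMod p)[X], u ≠ 0 → v ≠ 0 → u.natDegree ≤ D →
      v.natDegree ≤ D → F * (u * derivative v - derivative u * v) + u * v * (G k - G l) ≠ 0)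
    (B : ℕ) (hBp : 2 ^ Fintype.card ι * (B + m) + Fintype.card ι ≤ p)
    (hBD : 2 ^ Fintype.card ι * (B + m) ≤ D) (J M dY : ℕ) (hM : M ≤ p)
    (hYd : ∀ k, (Y k).natDegree ≤ dY)
    (Z : Finset (ZMod p)) (γ : ι → ZMod p) (hZF : ∀ t ∈ Z, F.eval t ≠ 0)
    (hZY : ∀ t ∈ Z, ∀ k, (Y k).eval t = γ k)
    (hcount : M * (B + M * m + J) < J * (Fintype.card ι * B)) :
    Z.card * M ≤ B + J * p + dY := by
  let pol : (Fin J × ι × Fin B → ZMod p) → ℕ → ι → (ZMod p)[X] := fun c j k =>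
    if hj : j < J then ((degreeLTEquiv (ZMod p) B).symm fun b => c (⟨j, hj⟩, k, b) : (ZMod p)[X])
    else 0
  have pol_add : ∀ c c' j k, pol (c + c') j k = pol c j k + pol c' j k := by
    intro c c' j k
    simp only [pol]
    split_ifs
    · rw [← Submodule.coe_add, ← map_add]; rfl
    · simp
  have pol_smul : ∀ (r : ZMod p) c j k, pol (r • c) j k = r • pol c j k := by
    intro r c j k
    simp only [pol]
    split_ifs
    · rw [← Submodule.coe_smul, ← map_smul]; rfl
    · simp
  have pol_deg : ∀ c j k, (pol c j k).natDegree ≤ B := by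
    intro c j k
    simp only [pol]
    split_ifs
    · exact natDegree_le_iff_degree_le.mpr (mem_degreeLT.mp (Subtype.property _)).le
    · simp
  -- the polynomials whose vanishing makes the auxiliary polynomial vanish to order `M` on `Z`
  let P : (Fin J × ι × Fin B → ZMod p) → ℕ → (ZMod p)[X] := fun c ℓ =>
    ∑ j ∈ Finset.range J, ∑ k, hop F (G k) ℓ (pol c j k) * X ^ j * C (γ k)
  let Φ : (Fin J × ι × Fin B → ZMod p) →ₗ[ZMod p] (Fin M × Fin (B + M * m + J) → ZMod p) :=
    { toFun := fun c w => (P c w.1).coeff w.2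
      map_add' := by
        intro c c'
        ext w
        simp only [P, pol_add, map_add, add_mul, Finset.sum_add_distrib, coeff_add, Pi.add_apply]
      map_smul' := by
        intro r c
        ext w
        simp only [P, pol_smul, map_smul, smul_mul_assoc, ← Finset.smul_sum, coeff_smul,
          Pi.smul_apply, RingHom.id_apply] }
  have hker : LinearMap.ker Φ ≠ ⊥ := by
    refine LinearMap.ker_ne_bot_of_finrank_lt ?_
    simpa [Module.finrank_fintype_fun_eq_card] using hcount
  obtain ⟨c, hc, hc0⟩ := (Submodule.ne_bot_iff _).mp hker
  have hP : ∀ ℓ < M, P c ℓ = 0 := by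
    intro ℓ hℓ
    ext w
    rw [coeff_zero]
    by_cases hw : w < B + M * m + J
    · exact congrFun (LinearMap.mem_ker.mp hc) (⟨ℓ, hℓ⟩, ⟨w, hw⟩)
    · refine coeff_eq_zero_of_natDegree_lt (lt_of_le_of_lt (b := B + ℓ * m + (J - 1)) ?_ ?_)
      · refine natDegree_sum_le_of_forall_le _ _ fun j hj => ?_
        refine natDegree_sum_le_of_forall_le _ _ fun k _ => ?_
        refine (natDegree_mul_C_le _ _).trans (natDegree_mul_le.trans ?_)
        have e1 := natDegree_hop hF (hG k) (pol c j k) ℓ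
        have e2 := pol_deg c j k
        have e3 := Finset.mem_range.mp hj
        rw [natDegree_X_pow]
        omega
      · have e1 : ℓ * m ≤ M * m := by gcongr
        have : 0 < J := by
          rcases Nat.eq_zero_or_pos J with h | h
          · simp [h] at hcount
          · exact h
        omega
  set E := ∑ j ∈ Finset.range J, ∑ k, pol c j k * X ^ (j * p) * Y k with hE
  have hE0 : E ≠ 0 := by
    intro h0
    have hz := independence F G Y hF hG hY hFY D hsep B hBp hBD J (pol c) (pol_deg c) h0
    refine hc0 (funext fun w => ?_)
    obtain ⟨j, k, b⟩ := w
    have h1 := hz j j.2 k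
    simp only [pol, j.2, dif_pos] at h1
    have h2 := (Submodule.coe_eq_zero.mp h1)
    rw [LinearEquiv.map_eq_zero_iff] at h2
    exact congrFun h2 b
  have hEdeg : E.natDegree ≤ B + J * p + dY := by
    refine natDegree_sum_le_of_forall_le _ _ fun j hj => ?_
    refine natDegree_sum_le_of_forall_le _ _ fun k _ => ?_
    have e3 := Finset.mem_range.mp hj
    have e4 : j * p ≤ J * p := by gcongr
    have e2 := pol_deg c j k
    refine natDegree_mul_le.trans (add_le_add (natDegree_mul_le.trans ?_) (hYd k))
    rw [natDegree_X_pow]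
    omega
  have hroot : ∀ t ∈ Z, ∀ ℓ < M, (derivative^[ℓ] E).IsRoot t := by
    intro t ht ℓ hℓ
    have e1 : F ^ ℓ * derivative^[ℓ] E =
        ∑ j ∈ Finset.range J, ∑ k, hop F (G k) ℓ (pol c j k) * X ^ (j * p) * Y k := by
      rw [hE, iterate_derivative_sum, Finset.mul_sum]
      refine Finset.sum_congr rfl fun j _ => ?_
      rw [iterate_derivative_sum, Finset.mul_sum]
      refine Finset.sum_congr rfl fun k _ => ?_
      exact hop_spec (hFY k) (by rw [derivative_X_pow]; simp) _ _
    have e2 : (F ^ ℓ * derivative^[ℓ] E).eval t = (P c ℓ).eval t := by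
      rw [e1]
      simp only [P, eval_finsetSum, eval_mul, eval_pow, eval_X, eval_C, hZY t ht]
      refine Finset.sum_congr rfl fun j _ => Finset.sum_congr rfl fun k _ => ?_
      rw [mul_comm j p, pow_mul, ZMod.pow_card]
    rw [hP ℓ hℓ, eval_mul, eval_zero, eval_pow] at e2
    exact (mul_eq_zero.mp e2).resolve_left (pow_ne_zero _ (hZF t ht))
  have hmult : ∀ t ∈ Z, M ≤ E.roots.count t := by
    intro t ht
    rw [count_roots]
    rcases Nat.eq_zero_or_pos M with h | h
    · omega
    have := lt_rootMultiplicity_of_isRoot_iterate_derivative_of_mem_nonZeroDivisors (n := M - 1)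
      hE0 (fun ℓ hℓ => hroot t ht ℓ (by omega)) ?_
    · omega
    · rw [mem_nonZeroDivisors_iff_ne_zero, Ne, CharP.cast_eq_zero_iff (ZMod p) p,
        (Fact.out : p.Prime).dvd_factorial]
      omega
  calc Z.card * M = ∑ _t ∈ Z, M := by simp
    _ ≤ ∑ t ∈ Z, E.roots.count t := Finset.sum_le_sum hmult
    _ ≤ ∑ t ∈ Z ∪ E.roots.toFinset, E.roots.count t :=
        Finset.sum_le_sum_of_subset Finset.subset_union_left
    _ = E.roots.card := Multiset.sum_count_eq_card fun a ha =>
        Finset.mem_union_right _ (Multiset.mem_toFinset.mpr ha)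
    _ ≤ E.natDegree := card_roots' E
    _ ≤ _ := hEdeg

/-! ### Shifts lying in prescribed cosets -/

/-- The `t` for which every `(t + sᵢ)^N` equals the prescribed `gᵢ`. When `N d = p - 1` and the `gᵢ` are
nonzero, this puts each `t + sᵢ` into a prescribed coset of the `d`-th powers. -/
def cosetSet (s g : Fin m → ZMod p) (N : ℕ) : Finset (ZMod p) :=
  Finset.univ.filter fun t => ∀ i, (t + s i) ^ N = g i

/-- `stepanov` applied to `Y_k = ∏ᵢ (X + sᵢ)^{N kᵢ}`, `0 ≤ kᵢ < d`, which equals `∏ᵢ gᵢ^{kᵢ}` on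
`cosetSet`. -/
lemma card_cosetSet_aux {d N : ℕ} (hN : N * d = p - 1) (s g : Fin m → ZMod p)
    (hs : Function.Injective s) (hs0 : ∀ i, s i ≠ 0) (hg : ∀ i, g i ≠ 0) (B J M : ℕ)
    (hB : d * (2 ^ d ^ m * (B + m) + d ^ m + 1) < p) (hM : M ≤ p)
    (hcount : M * (B + M * m + J) < J * (d ^ m * B)) :
    (cosetSet s g N).card * M ≤ B + J * p + m * p := by
  have hp := (Fact.out : p.Prime).two_le
  have hd : 0 < d := by
    rcases Nat.eq_zero_or_pos d with h | h
    · subst h; omega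
    · exact h
  have hN0 : N ≠ 0 := by rintro rfl; omega
  have hQ : Fintype.card (Fin m → Fin d) = d ^ m := by simp
  refine stepanov (ι := Fin m → Fin d) (m := m) (Fpoly s)
    (fun k => Gpoly s (fun i => ((N * (k i : ℕ) : ℕ) : ZMod p)))
    (fun k => ∏ i, (X + C (s i)) ^ (N * (k i : ℕ)))
    (natDegree_Fpoly s) (fun k => natDegree_Gpoly s _) ?_ (fun k => Fpoly_mul_derivative s _)
    (2 ^ d ^ m * (B + m)) ?_ B ?_ ?_ J M (m * p) hM ?_ _ (fun k => ∏ i, g i ^ (k i : ℕ)) ?_ ?_ ?_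
  · intro k
    rw [eval_prod, Finset.prod_ne_zero_iff]
    intro i _
    simpa using fun h => absurd h (hs0 i)
  · intro k l hkl u v hu hv hu' hv'
    refine separation hN s hs (lt_of_le_of_lt ?_ hB) k l hkl u v hu hv hu' hv'
    gcongr
    omega
  · rw [hQ]
    nlinarith
  · rw [hQ]
  · intro k
    refine (natDegree_prod_le _ _).trans ?_
    refine (Finset.sum_le_card_nsmul _ _ p fun i _ => ?_).trans (by simp)
    rw [natDegree_pow, natDegree_X_add_C, mul_one]
    calc N * (k i : ℕ) ≤ N * d := by gcongr; exact (k i).isLt.le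
      _ ≤ p := by omega
  · intro t ht
    rw [Fpoly, eval_prod, Finset.prod_ne_zero_iff]
    intro i _ h0
    have := (Finset.mem_filter.mp ht).2 i
    simp only [eval_add, eval_X, eval_C] at h0
    rw [h0, zero_pow hN0] at this
    exact hg i this.symm
  · intro t ht k
    rw [eval_prod]
    refine Finset.prod_congr rfl fun i _ => ?_
    simp only [eval_pow, eval_add, eval_X, eval_C, pow_mul, (Finset.mem_filter.mp ht).2 i]
  · rwa [hQ]

lemma card_cosetSet_shift (s g : Fin m → ZMod p) (N : ℕ) (c : ZMod p) :
    (cosetSet (fun i => s i + c) g N).card = (cosetSet s g N).card := by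
  refine Finset.card_bij (fun t _ => t + c) ?_ ?_ ?_
  · intro t ht
    simp only [cosetSet, Finset.mem_filter, Finset.mem_univ, true_and] at ht ⊢
    intro i
    rw [← ht i]; ring
  · intro a _ b _ h
    exact add_right_cancel h
  · intro t ht
    simp only [cosetSet, Finset.mem_filter, Finset.mem_univ, true_and] at ht ⊢
    exact ⟨t - c, fun i => by rw [← ht i]; ring, by ring⟩

/-- As `card_cosetSet_aux`, without the condition `sᵢ ≠ 0`, which a translation of `t` achieves. -/
lemma card_cosetSet_raw {d N : ℕ} (hN : N * d = p - 1) (s g : Fin m → ZMod p)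
    (hs : Function.Injective s) (hg : ∀ i, g i ≠ 0) (hmp : m < p) (B J M : ℕ)
    (hB : d * (2 ^ d ^ m * (B + m) + d ^ m + 1) < p) (hM : M ≤ p)
    (hcount : M * (B + M * m + J) < J * (d ^ m * B)) :
    (cosetSet s g N).card * M ≤ B + J * p + m * p := by
  obtain ⟨c, hc⟩ : ∃ c : ZMod p, ∀ i, s i + c ≠ 0 := by
    by_contra! h
    have : (Finset.univ : Finset (ZMod p)) ⊆ Finset.univ.image fun i => -s i := by
      intro c _
      obtain ⟨i, hi⟩ := h c
      exact Finset.mem_image.mpr ⟨i, Finset.mem_univ i, by linear_combination -hi⟩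
    have h1 := (Finset.card_le_card this).trans Finset.card_image_le
    simp [ZMod.card] at h1
    omega
  rw [← card_cosetSet_shift s g N c]
  exact card_cosetSet_aux hN _ g (fun i j h => hs (add_right_cancel h)) hc hg B J M hB hM hcount

/-- The sharp upper bound `|cosetSet| ≤ p / d^m + O(√p)`, by a choice of parameters in
`card_cosetSet_raw`. -/
lemma card_cosetSet_le (m d : ℕ) (hd : 0 < d) : ∃ C P0 : ℕ, ∀ (p N : ℕ) [Fact p.Prime],
    P0 ≤ p → N * d = p - 1 → ∀ s g : Fin m → ZMod p, Function.Injective s → (∀ i, g i ≠ 0) →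
      d ^ m * (cosetSet s g N).card ≤ p + C * p.sqrt := by
  -- With `Q = d ^ m`, the parameters are `M = √p`, `B = p / K` and `J = M / Q + A`. The constant `K`
  -- keeps `d` times the degrees in the elimination below `p`. The bound obtained is about
  -- `Q J p / M = p + O(√p)`, since the shift `A` is constant; `A` is large enough for the unknowns,
  -- about `(M + A Q) B` in number, to exceed the equations, at most `M B + (m + 2) p`.
  set Q := d ^ m with hQ
  have hQ0 : 0 < Q := by positivity
  set K := 4 * d * 2 ^ Q with hK
  have hK0 : 0 < K := by positivity
  set A := 2 * K * (m + 2) + 2 with hA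
  refine ⟨4 * (Q * (1 + m + A)), A ^ 2 + 2 * K + 4 * (d * (2 ^ Q * m + Q + 1)) + m + 1, ?_⟩
  intro p N _ hP hN s g hs hg
  set M := p.sqrt with hM
  set B := p / K with hB
  set J := M / Q + A with hJ
  have hM2 : M * M ≤ p := Nat.sqrt_le p
  have hM3 : p < (M + 1) * (M + 1) := Nat.lt_succ_sqrt p
  have hAM : A ≤ M := Nat.le_sqrt'.mpr (by omega)
  have hA0 : 0 < A := by omega
  have hBK : K * B ≤ p := Nat.mul_div_le p K
  have hBK2 : p < K * (B + 1) := Nat.lt_mul_div_succ p hK0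
  have hp2 : p ≤ 2 * K * B := by
    have : K * (B + 1) = K * B + K := by ring
    have : 2 * K * B = 2 * (K * B) := by ring
    omega
  have hB0 : 0 < B := by
    rcases Nat.eq_zero_or_pos B with h | h
    · rw [h] at hp2; omega
    · exact h
  have hJQ1 : J * Q ≤ M + A * Q := by
    have := Nat.div_mul_le_self M Q
    rw [hJ, add_mul]; omega
  have hJQ2 : M + (A - 1) * Q ≤ J * Q := by
    have h1 : M < Q * (M / Q + 1) := Nat.lt_mul_div_succ M hQ0
    obtain ⟨A', hA'⟩ : ∃ A', A = A' + 1 := ⟨A - 1, by omega⟩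
    rw [hJ, hA', Nat.add_sub_cancel]
    nlinarith
  have hJM : J ≤ M + A := by
    have := Nat.div_le_self M Q
    omega
  have hMp : M ≤ p := Nat.sqrt_le_self p
  have main := card_cosetSet_raw (m := m) hN s g hs hg (by omega) B J M ?_ hMp ?_
  · have hBp : B ≤ p := Nat.div_le_self p K
    have hM4 : p ≤ 4 * (M * M) := by nlinarith
    have hM0 : 0 < M := by omega
    refine Nat.le_of_mul_le_mul_right ?_ hM0
    calc Q * (cosetSet s g N).card * M = Q * ((cosetSet s g N).card * M) := by ring
      _ ≤ Q * (B + J * p + m * p) := by gcongr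
      _ ≤ Q * (p + J * p + m * p) := by gcongr
      _ = p * (J * Q) + p * (Q * (1 + m)) := by ring
      _ ≤ p * (M + A * Q) + p * (Q * (1 + m)) := by gcongr
      _ = p * M + p * (Q * (1 + m + A)) := by ring
      _ ≤ p * M + 4 * (M * M) * (Q * (1 + m + A)) := by gcongr
      _ = _ := by ring
  · have h1 : 4 * (d * (2 ^ Q * B)) = K * B := by rw [hK]; ring
    have h2 : d * (2 ^ Q * (B + m) + Q + 1) = d * (2 ^ Q * B) + d * (2 ^ Q * m + Q + 1) := by ring
    rw [h2]
    have : 0 < d * (2 ^ Q * m + Q + 1) := by positivity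
    omega
  · have h1 : M * (M * m + J) ≤ (m + 2) * p := by
      calc M * (M * m + J) ≤ M * (M * m + (M + M)) := by gcongr; omega
        _ = (m + 2) * (M * M) := by ring
        _ ≤ _ := by gcongr
    have h2 : (m + 2) * p < (A - 1) * Q * B := by
      calc (m + 2) * p ≤ (m + 2) * (2 * K * B) := by gcongr
        _ = (A - 2) * B := by rw [hA, Nat.add_sub_cancel]; ring
        _ < (A - 1) * B := by
          refine Nat.mul_lt_mul_of_pos_right ?_ hB0
          omega
        _ ≤ (A - 1) * Q * B := by
          gcongr
          exact Nat.le_mul_of_pos_right _ hQ0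
    calc M * (B + M * m + J) = M * B + M * (M * m + J) := by ring
      _ < M * B + (A - 1) * Q * B := by omega
      _ = (M + (A - 1) * Q) * B := by ring
      _ ≤ J * Q * B := by gcongr
      _ = _ := by ring

/-! ### Solutions of a system of shifted power equations over a prime field -/

/-- The solutions `x` of `b x^d = u` in the prime field. -/
def rootSet (b : ZMod p) (d : ℕ) (u : ZMod p) : Finset (ZMod p) :=
  Finset.univ.filter fun x => b * x ^ d = u

lemma card_rootSet_le {b : ZMod p} (hb : b ≠ 0) {d : ℕ} (hd : 0 < d) (u : ZMod p) :
    (rootSet b d u).card ≤ d := by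
  have hP : (C b * X ^ d - C u : (ZMod p)[X]).natDegree = d := by
    rw [natDegree_sub_C, natDegree_C_mul_X_pow _ _ hb]
  have hP0 : (C b * X ^ d - C u : (ZMod p)[X]) ≠ 0 := by
    intro h; rw [h] at hP; simp at hP; omega
  have h1 : rootSet b d u ⊆ (C b * X ^ d - C u : (ZMod p)[X]).roots.toFinset := by
    intro x hx
    rw [Multiset.mem_toFinset, mem_roots hP0, IsRoot.def]
    have := (Finset.mem_filter.mp hx).2
    simp [this]
  exact (Finset.card_le_card h1).trans ((Multiset.toFinset_card_le _).trans
    ((card_roots' _).trans hP.le))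

/-- The `d`-th powers form a subgroup of the kernel of `u ↦ u^N`, where `N = (p - 1) / gcd (p - 1, d)`.
The group of units being cyclic, the two subgroups have the same order and so coincide. -/
lemma exists_pow_eq {d N : ℕ} (hN : N * (p - 1).gcd d = p - 1) (hd : 0 < d) (u : (ZMod p)ˣ)
    (hu : u ^ N = 1) : ∃ x : (ZMod p)ˣ, x ^ d = u := by
  have hc : Nat.card (ZMod p)ˣ = p - 1 := by
    rw [Nat.card_eq_fintype_card, ZMod.card_units]
  have hg : 0 < (p - 1).gcd d := Nat.gcd_pos_of_pos_right _ hd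
  have hp := (Fact.out : p.Prime).two_le
  have hN0 : 0 < N := by
    rcases Nat.eq_zero_or_pos N with h | h
    · subst h; omega
    · exact h
  have h1 := IsCyclic.card_powMonoidHom_range (G := (ZMod p)ˣ) d
  have h2 := IsCyclic.card_powMonoidHom_ker (G := (ZMod p)ˣ) N
  rw [hc] at h1 h2
  have h3 : (p - 1) / (p - 1).gcd d = N := by
    conv_lhs => lhs; rw [← hN]
    exact Nat.mul_div_cancel _ hg
  have h4 : (p - 1).gcd N = N := Nat.gcd_eq_right ⟨_, hN.symm⟩
  rw [h3] at h1
  rw [h4] at h2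
  have hle : (powMonoidHom d : (ZMod p)ˣ →* (ZMod p)ˣ).range ≤
      (powMonoidHom N : (ZMod p)ˣ →* (ZMod p)ˣ).ker := by
    rintro _ ⟨x, rfl⟩
    rw [MonoidHom.mem_ker, powMonoidHom_apply, powMonoidHom_apply, ← pow_mul]
    obtain ⟨d', hd'⟩ := Nat.gcd_dvd_right (p - 1) d
    have : d * N = (p - 1) * d' := by
      conv_lhs => rw [hd']
      calc (p - 1).gcd d * d' * N = N * (p - 1).gcd d * d' := by ring
        _ = _ := by rw [hN]
    rw [this, pow_mul, ZMod.units_pow_card_sub_one_eq_one, one_pow]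
  have heq := Subgroup.eq_of_le_of_card_ge hle (by rw [h1, h2])
  have hmem : u ∈ (powMonoidHom N : (ZMod p)ˣ →* (ZMod p)ˣ).ker := by
    rwa [MonoidHom.mem_ker, powMonoidHom_apply]
  rw [← heq] at hmem
  exact hmem

lemma card_pow_eq_one {d : ℕ} :
    (Finset.univ.filter fun x : (ZMod p)ˣ => x ^ d = 1).card = (p - 1).gcd d := by
  have h2 := IsCyclic.card_powMonoidHom_ker (G := (ZMod p)ˣ) d
  rw [Nat.card_eq_fintype_card (α := (ZMod p)ˣ), ZMod.card_units] at h2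
  rw [← h2, ← Fintype.card_subtype, ← Nat.card_eq_fintype_card]
  rfl

/-- For `u ≠ 0` the equation `b x^d = u` has `gcd (p - 1, d)` solutions when `u / b` is a `d`-th power,
and none otherwise. -/
lemma card_rootSet {b : ZMod p} (hb : b ≠ 0) {d N : ℕ} (hd : 0 < d)
    (hN : N * (p - 1).gcd d = p - 1) {u : ZMod p} (hu : u ≠ 0) :
    (rootSet b d u).card = if u ^ N = b ^ N then (p - 1).gcd d else 0 := by
  split_ifs with h
  · obtain ⟨b', rfl⟩ := (isUnit_iff_ne_zero.mpr hb)
    obtain ⟨u', rfl⟩ := (isUnit_iff_ne_zero.mpr hu)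
    have h' : u' ^ N = b' ^ N := Units.ext (by simpa using h)
    obtain ⟨x0, hx0⟩ := exists_pow_eq hN hd (b'⁻¹ * u') (by rw [mul_pow, h', ← mul_pow]; simp)
    rw [← card_pow_eq_one]
    symm
    refine Finset.card_bij (fun x _ => ((x0 * x : (ZMod p)ˣ) : ZMod p)) ?_ ?_ ?_
    · intro x hx
      have hx := (Finset.mem_filter.mp hx).2
      refine Finset.mem_filter.mpr ⟨Finset.mem_univ _, ?_⟩
      rw [← Units.val_pow_eq_pow_val, mul_pow, hx, mul_one, hx0, ← Units.val_mul]
      simp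
    · intro x _ y _ hxy
      exact mul_left_cancel (Units.ext hxy)
    · intro y hy
      have hy := (Finset.mem_filter.mp hy).2
      have hy0 : y ≠ 0 := by
        rintro rfl
        rw [zero_pow hd.ne', mul_zero] at hy
        exact hu hy.symm
      obtain ⟨y', rfl⟩ := isUnit_iff_ne_zero.mpr hy0
      have hy' : b' * y' ^ d = u' := Units.ext (by simpa using hy)
      refine ⟨x0⁻¹ * y', ?_, by simp⟩
      refine Finset.mem_filter.mpr ⟨Finset.mem_univ _, ?_⟩
      rw [mul_pow, inv_pow, hx0, ← hy']
      simp
  · rw [Finset.card_eq_zero, Finset.eq_empty_iff_forall_notMem]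
    intro x hx
    have hx := (Finset.mem_filter.mp hx).2
    apply h
    have hx0 : x ≠ 0 := by
      rintro rfl
      rw [zero_pow hd.ne', mul_zero] at hx
      exact hu hx.symm
    obtain ⟨d', hd'⟩ := Nat.gcd_dvd_right (p - 1) d
    have : d * N = (p - 1) * d' := by
      calc d * N = (p - 1).gcd d * d' * N := by rw [← hd']
        _ = N * (p - 1).gcd d * d' := by ring
        _ = _ := by rw [hN]
    rw [← hx, mul_pow, ← pow_mul, this, pow_mul, ZMod.pow_card_sub_one_eq_one hx0, one_pow, mul_one]

/-- The number of pairs `(t, x)` with `b xᵢ^d = t + sᵢ` for all `i`, sorted by `t`. -/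
def fibreSum (b : ZMod p) (d : ℕ) (s : Fin m → ZMod p) : ℕ :=
  ∑ t : ZMod p, ∏ i, (rootSet b d (t + s i)).card

lemma fibreSum_le {b : ZMod p} (hb : b ≠ 0) {d : ℕ} (hd : 0 < d) (s : Fin m → ZMod p) :
    fibreSum b d s ≤ p * d ^ m := by
  calc fibreSum b d s ≤ ∑ _t : ZMod p, d ^ m := by
        refine Finset.sum_le_sum fun t _ => ?_
        refine (Finset.prod_le_pow_card _ _ d fun i _ => card_rootSet_le hb hd _).trans ?_
        simp
    _ = _ := by simp [ZMod.card]

/-- Outside the at most `m` points `-sᵢ`, the summand of `fibreSum` is `gcd (p - 1, d)^m` on one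
`cosetSet` and zero off it. -/
lemma fibreSum_approx {b : ZMod p} (hb : b ≠ 0) {d N : ℕ} (hd : 0 < d)
    (hN : N * (p - 1).gcd d = p - 1) (s : Fin m → ZMod p) :
    (p - 1).gcd d ^ m * (cosetSet s (fun _ => b ^ N) N).card ≤ fibreSum b d s ∧
    fibreSum b d s ≤ (p - 1).gcd d ^ m * (cosetSet s (fun _ => b ^ N) N).card + m * d ^ m := by
  have hp := (Fact.out : p.Prime).two_le
  have hN0 : N ≠ 0 := by rintro rfl; omega
  set e := (p - 1).gcd d
  set Z := cosetSet s (fun _ => b ^ N) N with hZ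
  let bad : Finset (ZMod p) := Finset.univ.image fun i => -s i
  have hbad : bad.card ≤ m := Finset.card_image_le.trans (by simp)
  have hgood : ∀ t ∉ bad, ∀ i, t + s i ≠ 0 := by
    intro t ht i h
    exact ht (Finset.mem_image.mpr ⟨i, Finset.mem_univ i, by linear_combination -h⟩)
  have hZbad : Z ⊆ Finset.univ \ bad := by
    intro t ht
    refine Finset.mem_sdiff.mpr ⟨Finset.mem_univ _, fun hb' => ?_⟩
    obtain ⟨i, _, hi⟩ := Finset.mem_image.mp hb'
    have := (Finset.mem_filter.mp ht).2 i
    rw [← hi, neg_add_cancel, zero_pow hN0] at this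
    exact pow_ne_zero N hb this.symm
  have h1 : ∑ t ∈ Finset.univ \ bad, ∏ i, (rootSet b d (t + s i)).card = e ^ m * Z.card := by
    have : ∀ t ∈ Finset.univ \ bad, ∏ i, (rootSet b d (t + s i)).card =
        if t ∈ Z then e ^ m else 0 := by
      intro t ht
      have ht' := hgood t (Finset.mem_sdiff.mp ht).2
      simp only [card_rootSet hb hd hN (ht' _)]
      split_ifs with h
      · have h := (Finset.mem_filter.mp h).2
        simp [h, e]
      · simp only [hZ, cosetSet, Finset.mem_filter, Finset.mem_univ, true_and, not_forall] at h
        obtain ⟨i, hi⟩ := h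
        exact Finset.prod_eq_zero (Finset.mem_univ i) (if_neg hi)
    rw [Finset.sum_congr rfl this, ← Finset.sum_filter, Finset.filter_mem_eq_inter,
      Finset.inter_eq_right.mpr hZbad, Finset.sum_const, smul_eq_mul, mul_comm]
  have h2 : ∑ t ∈ bad, ∏ i, (rootSet b d (t + s i)).card ≤ m * d ^ m := by
    refine (Finset.sum_le_card_nsmul _ _ (d ^ m) fun t _ => ?_).trans ?_
    · refine (Finset.prod_le_pow_card _ _ d fun i _ => card_rootSet_le hb hd _).trans ?_
      simp
    · rw [smul_eq_mul]; gcongr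
  have h3 : fibreSum b d s = e ^ m * Z.card + ∑ t ∈ bad, ∏ i, (rootSet b d (t + s i)).card := by
    rw [← h1]
    exact (Finset.sum_sdiff (Finset.subset_univ bad)).symm
  omega

/-- From upper bounds to a lower bound. Off the points `-sᵢ` the field is covered by the sets
`cosetSet s g N` with every `gᵢ` an `e`-th root of unity, at most `e^m` in number. If each has at most
`T / e^m` elements, then the one for `g = b^N` has at least
`p - m - (e^m - 1) T / e^m`. -/
lemma cover {e N : ℕ} (he : 0 < e) (hN : N * e = p - 1) {b : ZMod p} (hb : b ≠ 0)
    (s : Fin m → ZMod p) (T : ℕ)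
    (hT : ∀ g : Fin m → ZMod p, (∀ i, g i ≠ 0) → e ^ m * (cosetSet s g N).card ≤ T) :
    e ^ m * p + T ≤ e ^ m * m + e ^ m * (cosetSet s (fun _ => b ^ N) N).card + e ^ m * T := by
  classical
  let bad : Finset (ZMod p) := Finset.univ.image fun i => -s i
  have hbad : bad.card ≤ m := Finset.card_image_le.trans (by simp)
  let U : Finset (ZMod p) := rootSet 1 e 1
  have hU : U.card ≤ e := card_rootSet_le one_ne_zero he 1
  have hUmem : ∀ x : ZMod p, x ≠ 0 → x ^ N ∈ U := by
    intro x hx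
    refine Finset.mem_filter.mpr ⟨Finset.mem_univ _, ?_⟩
    rw [← pow_mul, hN, ZMod.pow_card_sub_one_eq_one hx, one_mul]
  have hU0 : ∀ x ∈ U, x ≠ 0 := by
    rintro x hx rfl
    have := (Finset.mem_filter.mp hx).2
    rw [zero_pow he.ne'] at this
    simp at this
  let W : Finset (Fin m → ZMod p) := Fintype.piFinset fun _ => U
  have hW : W.card ≤ e ^ m := by
    simp only [W, Fintype.card_piFinset, Finset.prod_const, Finset.card_univ, Fintype.card_fin]
    gcongr
  have hg0 : (fun _ => b ^ N : Fin m → ZMod p) ∈ W :=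
    Fintype.mem_piFinset.mpr fun _ => hUmem b hb
  have hcov : (Finset.univ : Finset (ZMod p)) ⊆ bad ∪ W.biUnion fun g => cosetSet s g N := by
    intro t _
    by_cases ht : t ∈ bad
    · exact Finset.mem_union_left _ ht
    · refine Finset.mem_union_right _ (Finset.mem_biUnion.mpr ⟨fun i => (t + s i) ^ N, ?_, ?_⟩)
      · refine Fintype.mem_piFinset.mpr fun i => hUmem _ fun h => ht ?_
        exact Finset.mem_image.mpr ⟨i, Finset.mem_univ i, by linear_combination -h⟩
      · exact Finset.mem_filter.mpr ⟨Finset.mem_univ _, fun _ => rfl⟩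
  have h1 : p ≤ m + ∑ g ∈ W, (cosetSet s g N).card := by
    have := (Finset.card_le_card hcov).trans (Finset.card_union_le _ _)
    rw [Finset.card_univ, ZMod.card] at this
    have h2 : (W.biUnion fun g => cosetSet s g N).card ≤ _ := Finset.card_biUnion_le
    omega
  rw [← Finset.add_sum_erase W _ hg0] at h1
  have h3 : e ^ m * ∑ g ∈ W.erase (fun _ => b ^ N), (cosetSet s g N).card ≤ (e ^ m - 1) * T := by
    rw [Finset.mul_sum]
    refine (Finset.sum_le_card_nsmul _ _ T fun g hg => hT g fun i => ?_).trans ?_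
    · exact hU0 _ (Fintype.mem_piFinset.mp (Finset.mem_of_mem_erase hg) i)
    · rw [smul_eq_mul, Finset.card_erase_of_mem hg0]
      gcongr
  have h4 : (e ^ m - 1) * T + T = e ^ m * T := by
    have : 0 < e ^ m := by positivity
    obtain ⟨k, hk⟩ : ∃ k, e ^ m = k + 1 := ⟨e ^ m - 1, by omega⟩
    rw [hk, Nat.add_sub_cancel]; ring
  have h5 := Nat.mul_le_mul_left (e ^ m) h1
  rw [mul_add, mul_add] at h5
  omega

/-- The number of solutions counted by `fibreSum` is `p + O(√p)` when the shifts are distinct, with a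
constant depending only on `m` and `d`. -/
lemma weil (m d : ℕ) (hd : 0 < d) : ∃ C : ℕ, ∀ (p : ℕ) [Fact p.Prime] (b : ZMod p)
    (s : Fin m → ZMod p), b ≠ 0 → Function.Injective s →
      |(fibreSum b d s : ℤ) - p| ≤ C * p.sqrt := by
  -- `card_cosetSet_le` is used with exponent `gcd (p - 1, d)`, which lies in `{1, …, d}`; adding up its
  -- constants over this range makes them independent of `p`
  choose Cf Pf hf using card_cosetSet_le m
  set C1 := ∑ e ∈ Finset.range d, Cf (e + 1) e.succ_pos with hC1
  set P1 := ∑ e ∈ Finset.range d, Pf (e + 1) e.succ_pos with hP1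
  refine ⟨P1 * d ^ m + d ^ m * m + d ^ m * C1 + C1 + m * d ^ m, ?_⟩
  intro p _ b s hb hs
  have hp := (Fact.out : p.Prime).two_le
  have hsq : 1 ≤ p.sqrt := Nat.le_sqrt'.mpr (by omega)
  have hdm : 1 ≤ d ^ m := Nat.one_le_pow _ _ hd
  rcases lt_or_ge p P1 with hlt | hge
  -- finitely many small primes: the trivial bound, absorbed into the constant
  · have h1 := fibreSum_le hb hd s
    have h2 : p * d ^ m ≤ P1 * d ^ m := by gcongr
    have h3 : p ≤ p * d ^ m := Nat.le_mul_of_pos_right _ hdm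
    have h4 : P1 * d ^ m ≤ (P1 * d ^ m + d ^ m * m + d ^ m * C1 + C1 + m * d ^ m) * p.sqrt := by
      nlinarith [Nat.zero_le (d ^ m * m + d ^ m * C1 + C1 + m * d ^ m), Nat.zero_le (P1 * d ^ m)]
    have h5 : (((P1 * d ^ m + d ^ m * m + d ^ m * C1 + C1 + m * d ^ m) * p.sqrt : ℕ) : ℤ) =
      ((P1 * d ^ m + d ^ m * m + d ^ m * C1 + C1 + m * d ^ m : ℕ) : ℤ) * (p.sqrt : ℤ) := by
      push_cast; ring
    rw [← h5, abs_le]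
    constructor <;> omega
  · set e := (p - 1).gcd d with he
    have he0 : 0 < e := Nat.gcd_pos_of_pos_right _ hd
    have hed : e ≤ d := Nat.gcd_le_right _ hd
    obtain ⟨N, hN⟩ : ∃ N, N * e = p - 1 := by
      obtain ⟨N, hN⟩ := Nat.gcd_dvd_left (p - 1) d
      exact ⟨N, by rw [mul_comm]; exact hN.symm⟩
    obtain ⟨e', he'⟩ : ∃ e', e = e' + 1 := ⟨e - 1, by omega⟩
    have hmem : e' ∈ Finset.range d := Finset.mem_range.mpr (by omega)
    have hC : Cf (e' + 1) e'.succ_pos ≤ C1 :=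
      Finset.single_le_sum (f := fun e => Cf (e + 1) e.succ_pos) (fun _ _ => Nat.zero_le _) hmem
    have hP : Pf (e' + 1) e'.succ_pos ≤ P1 :=
      Finset.single_le_sum (f := fun e => Pf (e + 1) e.succ_pos) (fun _ _ => Nat.zero_le _) hmem
    have hT : ∀ g : Fin m → ZMod p, (∀ i, g i ≠ 0) →
        e ^ m * (cosetSet s g N).card ≤ p + C1 * p.sqrt := by
      intro g hg
      have := hf (e' + 1) e'.succ_pos p N (hP.trans hge) (by rw [← he', hN]) s g hs hg
      rw [he']
      refine this.trans ?_
      gcongr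
    have h1 := cover he0 hN hb s _ hT
    have h2 := fibreSum_approx hb hd hN s
    have h3 := hT (fun _ => b ^ N) (fun _ => pow_ne_zero _ hb)
    rw [← he] at h2
    set Z := e ^ m * (cosetSet s (fun _ => b ^ N) N).card
    have hem : e ^ m ≤ d ^ m := by gcongr
    have h4 : e ^ m * m ≤ d ^ m * m := by gcongr
    have h5 : e ^ m * (C1 * p.sqrt) ≤ d ^ m * (C1 * p.sqrt) := by gcongr
    have h6 : d ^ m * m ≤ d ^ m * m * p.sqrt := Nat.le_mul_of_pos_right _ hsq
    rw [mul_add] at h1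
    have h7 : (((P1 * d ^ m + d ^ m * m + d ^ m * C1 + C1 + m * d ^ m) * p.sqrt : ℕ) : ℤ) =
      ((P1 * d ^ m + d ^ m * m + d ^ m * C1 + C1 + m * d ^ m : ℕ) : ℤ) * (p.sqrt : ℤ) := by
      push_cast; ring
    have h8 : (P1 * d ^ m + d ^ m * m + d ^ m * C1 + C1 + m * d ^ m) * p.sqrt =
      P1 * d ^ m * p.sqrt + d ^ m * m * p.sqrt + d ^ m * (C1 * p.sqrt) + C1 * p.sqrt +
        d ^ m * m * p.sqrt := by ring
    have h9 : m * d ^ m = d ^ m * m := mul_comm _ _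
    rw [← h7, h8, abs_le]
    constructor <;> omega

end PrimeField

/-! ### The local count at a prime -/

lemma sigmaSum_sub (m : ℕ) (a : Fin (m - 1) → ℤ) {i j : ℕ} (hij : i ≤ j) (hj : j ≤ m - 1) :
    sigmaSum m a i (m - 1) - sigmaSum m a j (m - 1) = sigmaSum m a i j := by
  simp only [sigmaSum]
  rw [← Finset.sum_Ico_consecutive _ hij hj]
  ring

/-- If `p ∤ D(a)`, the components `σ_{i,m}(a)` of the canonical solution of `yᵢ - yᵢ₊₁ = aᵢ` are
distinct modulo `p`, their differences being the factors of `D(a)`. -/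
lemma injective_of_not_dvd {p m : ℕ} (a : Fin (m - 1) → ℤ) (h : ¬ (p : ℤ) ∣ Dprod m a) :
    Function.Injective fun i : Fin m => ((sigmaSum m a i (m - 1) : ℤ) : ZMod p) := by
  have key : ∀ i j : Fin m, i < j →
      ((sigmaSum m a i (m - 1) : ℤ) : ZMod p) ≠ ((sigmaSum m a j (m - 1) : ℤ) : ZMod p) := by
    intro i j hij he
    apply h
    refine Dvd.dvd.trans ?_ (Finset.dvd_prod_of_mem _
      (Finset.mem_filter.mpr ⟨Finset.mem_univ (i, j), hij⟩))
    rw [← ZMod.intCast_zmod_eq_zero_iff_dvd, ← sigmaSum_sub m a hij.le (by omega), Int.cast_sub,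
      he, sub_self]
  intro i j hij
  rcases lt_trichotomy i j with h1 | h1 | h1
  · exact absurd hij (key i j h1)
  · exact h1
  · exact absurd hij.symm (key j i h1)

/-- Sorting the solutions by `t = b x_m^d` makes the system equivalent to `b xᵢ^d = t + σ_{i,m}(a)`
for every `i`, whose unknowns are uncoupled once `t` is fixed. -/
lemma nuCount_eq {p m d : ℕ} [Fact p.Prime] (hm : 2 ≤ m) (b : ℤ) (a : Fin (m - 1) → ℤ) :
    nuCount m d b p a =
      fibreSum (b : ZMod p) d fun i : Fin m => ((sigmaSum m a i (m - 1) : ℤ) : ZMod p) := by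
  classical
  let last : Fin m := ⟨m - 1, by omega⟩
  rw [nuCount, Nat.card_eq_fintype_card, Fintype.card_subtype,
    Finset.card_eq_sum_card_fiberwise (t := Finset.univ)
      (f := fun x : Fin m → ZMod p => (b : ZMod p) * x last ^ d) (fun _ _ => Finset.mem_univ _),
    fibreSum]
  refine Finset.sum_congr rfl fun t _ => ?_
  rw [← Fintype.card_piFinset]
  congr 1
  ext x
  simp only [Finset.mem_filter, Finset.mem_univ, true_and, Fintype.mem_piFinset, rootSet]
  constructor
  · rintro ⟨h, ht⟩
    have key : ∀ n : ℕ, ∀ i : Fin m, i.1 + n = m - 1 →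
        (b : ZMod p) * x i ^ d = t + ((sigmaSum m a i (m - 1) : ℤ) : ZMod p) := by
      intro n
      induction n with
      | zero =>
        intro i hi
        have : i = last := Fin.ext (by simpa using hi)
        subst this
        rw [ht]
        simp [sigmaSum, last]
      | succ n ih =>
        intro i hi
        have h1 := h ⟨i.1, by omega⟩
        have h2 := ih ⟨i.1 + 1, by omega⟩ (by simp only; omega)
        have h3 : sigmaSum m a i (m - 1) = a ⟨i.1, by omega⟩ + sigmaSum m a (i.1 + 1) (m - 1) := by
          rw [sigmaSum, Finset.sum_eq_sum_Ico_succ_bot (by omega), sigmaSum, aseq,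
            dif_pos (by omega)]
        rw [h3]
        push_cast
        simp only [Fin.eta] at h1 h2
        linear_combination h1 + h2
    intro i
    exact key (m - 1 - i.1) i (by omega)
  · intro h
    refine ⟨fun i => ?_, ?_⟩
    · rw [h, h]
      have h3 : sigmaSum m a i (m - 1) = a i + sigmaSum m a (i.1 + 1) (m - 1) := by
        rw [sigmaSum, Finset.sum_eq_sum_Ico_succ_bot (by omega), sigmaSum, aseq,
          dif_pos (by omega)]
      simp only [h3]
      push_cast
      ring
    · rw [h]
      simp [sigmaSum, last]

lemma nuCount_le {m d c : ℕ} (hc : 0 < c) (b : ℤ) (a : Fin (m - 1) → ℤ) :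
    nuCount m d b c a ≤ c ^ m := by
  have : NeZero c := ⟨hc.ne'⟩
  refine (Nat.card_le_card_of_injective _ Subtype.val_injective).trans ?_
  simp [Nat.card_eq_fintype_card, ZMod.card]

/-- The local bound at a prime: `weil` when `p ∤ D(a)`, and the trivial bound `O(p)` otherwise, which
is the same estimate because the factor `gcd (p, D(a))^{1/2}` is then `√p`. -/
lemma prime_bound (m d : ℕ) (hm : 2 ≤ m) (hd : 0 < d) : ∃ C : ℝ, 1 ≤ C ∧
    ∀ (p : ℕ) (b : ℤ) (a : Fin (m - 1) → ℤ), p.Prime → ¬ (p : ℤ) ∣ b →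
      |((nuCount m d b p a : ℤ) - (p : ℤ) : ℝ)| ≤
        C * (p : ℝ) ^ (1 / 2 : ℝ) * (Int.gcd (p : ℤ) (Dprod m a) : ℝ) ^ (1 / 2 : ℝ) := by
  obtain ⟨C, hC⟩ := weil m d hd
  refine ⟨C + d ^ m + 1, by have : (0 : ℝ) ≤ C + d ^ m := by positivity
                            linarith, ?_⟩
  intro p b a hp hb
  have : Fact p.Prime := ⟨hp⟩
  have hb' : (b : ZMod p) ≠ 0 := by rwa [Ne, ZMod.intCast_zmod_eq_zero_iff_dvd]
  rw [nuCount_eq hm]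
  by_cases h : (p : ℤ) ∣ Dprod m a
  · have hg : Int.gcd (p : ℤ) (Dprod m a) = p := by
      exact Nat.gcd_eq_left (Int.natCast_dvd.mp h)
    have hle : ((fibreSum (b : ZMod p) d fun i : Fin m =>
        ((sigmaSum m a i (m - 1) : ℤ) : ZMod p) : ℕ) : ℝ) ≤ p * d ^ m := by
      exact_mod_cast fibreSum_le hb' hd _
    rw [hg, mul_assoc, ← Real.sqrt_eq_rpow, Real.mul_self_sqrt (by positivity)]
    set f := fibreSum (b : ZMod p) d fun i : Fin m => ((sigmaSum m a i (m - 1) : ℤ) : ZMod p)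
    have h1 : (0 : ℝ) ≤ f := by positivity
    have h2 : (0 : ℝ) ≤ C * p := by positivity
    have h3 : (0 : ℝ) ≤ (p : ℝ) * d ^ m := by positivity
    have h4 : (0 : ℝ) ≤ (p : ℝ) := by positivity
    push_cast
    rw [abs_le]
    constructor <;> nlinarith
  · have hg : Int.gcd (p : ℤ) (Dprod m a) = 1 := by
      rw [← Int.isCoprime_iff_gcd_eq_one]
      exact ((Nat.prime_iff_prime_int.mp hp).irreducible.coprime_iff_not_dvd).mpr h
    have h1 := hC p (b : ZMod p) _ hb' (injective_of_not_dvd a h)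
    have h2 : |((fibreSum (b : ZMod p) d fun i : Fin m =>
        ((sigmaSum m a i (m - 1) : ℤ) : ZMod p) : ℕ) : ℝ) - p| ≤ C * (p.sqrt : ℝ) := by
      exact_mod_cast h1
    rw [hg, ← Real.sqrt_eq_rpow]
    push_cast
    rw [Real.one_rpow, mul_one]
    refine h2.trans ?_
    have h3 := Real.nat_sqrt_le_real_sqrt (a := p)
    have h4 : (0 : ℝ) ≤ d ^ m + 1 := by positivity
    have h5 := Real.sqrt_nonneg (p : ℝ)
    calc (C : ℝ) * p.sqrt ≤ C * √p := by gcongr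
      _ ≤ _ := by nlinarith

/-! ### Divisor bound and square-full part -/

/-- `C^{ω(c)} = O_ε(c^ε)`: a prime `p ≥ C^{1/ε}` contributes a factor `C ≤ p^ε`, and there are boundedly
many others. -/
lemma pow_card_primeFactors_le (C ε : ℝ) (hC : 1 ≤ C) (hε : 0 < ε) : ∃ K : ℝ, 0 < K ∧
    ∀ c : ℕ, 0 < c → C ^ c.primeFactors.card ≤ K * (c : ℝ) ^ ε := by
  obtain ⟨P, hP⟩ := exists_nat_ge (C ^ (1 / ε))
  refine ⟨C ^ P, by positivity, fun c hc => ?_⟩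
  have h1 : ∀ p ∈ c.primeFactors, C ≤ (if p ∈ Finset.range P then C else 1) * (p : ℝ) ^ ε := by
    intro p hp
    have hp1 : (1 : ℝ) ≤ p := by exact_mod_cast (Nat.prime_of_mem_primeFactors hp).one_lt.le
    split_ifs with h
    · have := Real.one_le_rpow hp1 hε.le
      nlinarith
    · have : (P : ℝ) ≤ p := by exact_mod_cast not_lt.mp (fun h' => h (Finset.mem_range.mpr h'))
      rw [one_mul]
      calc C = (C ^ (1 / ε)) ^ ε := by
            rw [← Real.rpow_mul (by linarith), one_div_mul_cancel hε.ne', Real.rpow_one]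
        _ ≤ (p : ℝ) ^ ε := by
            refine Real.rpow_le_rpow (by positivity) (hP.trans this) hε.le
  have h2 : (∏ p ∈ c.primeFactors, (p : ℝ)) ≤ c := by
    rw [← Nat.cast_prod]
    exact_mod_cast Nat.le_of_dvd hc (Nat.prod_primeFactors_dvd c)
  calc C ^ c.primeFactors.card = ∏ _p ∈ c.primeFactors, C := by simp
    _ ≤ ∏ p ∈ c.primeFactors, ((if p ∈ Finset.range P then C else 1) * (p : ℝ) ^ ε) :=
        Finset.prod_le_prod (fun _ _ => by linarith) h1
    _ = (∏ p ∈ c.primeFactors, if p ∈ Finset.range P then C else 1) *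
          (∏ p ∈ c.primeFactors, (p : ℝ)) ^ ε := by
        rw [Finset.prod_mul_distrib, ← Real.finsetProd_rpow _ _ (fun _ _ => by positivity)]
    _ ≤ C ^ P * (c : ℝ) ^ ε := by
        refine mul_le_mul ?_ ?_ (by positivity) (by positivity)
        · rw [← Finset.prod_filter, Finset.prod_const]
          refine pow_le_pow_right₀ hC ?_
          rw [Finset.filter_mem_eq_inter]
          exact (Finset.card_le_card Finset.inter_subset_right).trans (by simp)
        · exact Real.rpow_le_rpow (by positivity) h2 hε.le

/-- For `q = q̃ v²` with `q̃` squarefree, an exponent of `q` that is at least `2` is at most three times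
the one in `v`; so the square-full part of `q` is at most `v³`. -/
lemma prod_squarefull_le {q qt v : ℕ} (hqt : Squarefree qt) (hv : 0 < v)
    (hq : q = qt * v ^ 2) (S : Finset ℕ) (hS : ∀ p ∈ S, p.Prime ∧ 2 ≤ q.factorization p) :
    ∏ p ∈ S, p ^ q.factorization p ≤ v ^ 3 := by
  have hqt0 : qt ≠ 0 := hqt.ne_zero
  have h1 : ∀ p, q.factorization p = qt.factorization p + 2 * v.factorization p := by
    intro p
    rw [hq, Nat.factorization_mul hqt0 (by positivity), Nat.factorization_pow]
    simp
  have h2 : ∀ p ∈ S, p ^ q.factorization p ≤ (p ^ v.factorization p) ^ 3 := by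
    intro p hp
    rw [← pow_mul]
    refine Nat.pow_le_pow_right (hS p hp).1.pos ?_
    have := hqt.natFactorization_le_one p
    have := h1 p
    have := (hS p hp).2
    omega
  have h3 : ∏ p ∈ S, p ^ v.factorization p ≤ v := by
    calc ∏ p ∈ S, p ^ v.factorization p ≤ ∏ p ∈ v.primeFactors, p ^ v.factorization p := by
          refine Finset.prod_le_prod_of_subset_of_one_le' ?_ ?_
          · intro p hp
            rw [← Nat.support_factorization, Finsupp.mem_support_iff]
            have := hqt.natFactorization_le_one p
            have := h1 p
            have := (hS p hp).2
            omega
          · intro p hp _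
            exact Nat.one_le_pow _ _ (Nat.prime_of_mem_primeFactors hp).pos
      _ = v := Nat.prod_factorization_pow_eq_self hv.ne'
  calc _ ≤ ∏ p ∈ S, (p ^ v.factorization p) ^ 3 := Finset.prod_le_prod' h2
    _ = (∏ p ∈ S, p ^ v.factorization p) ^ 3 := Finset.prod_pow _ _ _
    _ ≤ v ^ 3 := by gcongr

end Stepanov

/-! ### Assembly of the local bounds -/

theorem statement9 (m d : ℕ) (hm : 2 ≤ m) (hd : 2 ≤ d) (ε : ℝ) (hε : 0 < ε) :
    ∃ C : ℝ, 0 < C ∧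
      ∀ δ : ℝ, 0 < δ →
        ∀ q : ℕ, 0 < q →
          ∀ qt : ℕ, Squarefree qt → (∃ v : ℕ, 0 < v ∧ q = qt * v ^ 2) →
            (q : ℝ) ^ ((1 : ℝ) - δ) ≤ (qt : ℝ) →
            ∀ b : ℤ, IsCoprime b ((q : ℤ)) →
              ∀ a : Fin (m - 1) → ℤ, ∀ c : ℕ, c ∣ q → Nat.Coprime c (q / c) →
                (|Acoef m d b c a| : ℝ) ≤
                  C * (c : ℝ) ^ ((1 : ℝ) / 2 + ε) *
                    ((Int.gcd (c : ℤ) (Dprod m a) : ℝ)) ^ ((1 : ℝ) / 2) *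
                    (q : ℝ) ^ (2 * δ * (m : ℝ)) := by
  obtain ⟨C₀, hC₀, hprime⟩ := Stepanov.prime_bound m d hm (by omega)
  obtain ⟨K, hK, hcard⟩ := Stepanov.pow_card_primeFactors_le C₀ ε hC₀ hε
  refine ⟨K, hK, ?_⟩
  intro δ hδ q hq qt hqt hv hqqt b hb a c hcq hcop
  obtain ⟨v, hv, hqv⟩ := hv
  have hc : 0 < c := Nat.pos_of_dvd_of_pos hcq hq
  have hfac : ∀ p ∈ c.primeFactors, c.factorization p = q.factorization p := by
    intro p hp
    conv_rhs => rw [← Nat.mul_div_cancel' hcq]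
    exact (Nat.factorization_eq_of_coprime_left hcop
      (Nat.mem_primeFactors_iff_mem_primeFactorsList.mp hp)).symm
  have hfac1 : ∀ p ∈ c.primeFactors, 1 ≤ c.factorization p := fun p hp =>
    (Nat.prime_of_mem_primeFactors hp).factorization_pos_of_dvd hc.ne'
      (Nat.dvd_of_mem_primeFactors hp)
  have hpb : ∀ p ∈ c.primeFactors, ¬ (p : ℤ) ∣ b := by
    intro p hp h
    have hpq : (p : ℤ) ∣ (q : ℤ) :=
      Int.natCast_dvd_natCast.mpr ((Nat.dvd_of_mem_primeFactors hp).trans hcq)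
    exact (Nat.prime_iff_prime_int.mp (Nat.prime_of_mem_primeFactors hp)).not_isUnit
      (hb.isUnit_of_dvd' h hpq)
  set D := Dprod m a
  let f : ℕ → ℝ := fun p => |(((nuCount m d b (p ^ (c.factorization p)) a : ℤ) -
    (p : ℤ) ^ (c.factorization p) : ℤ) : ℝ)|
  have hA : |(Acoef m d b c a : ℝ)| = ∏ p ∈ c.primeFactors, f p := by
    rw [Acoef, Int.cast_prod, Finset.abs_prod]
  -- `S₁` carries the primes `p ‖ c`, where square-root cancellation is available; the
  -- square-full part `S₂` is estimated trivially
  set S₁ := c.primeFactors.filter fun p => c.factorization p = 1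
  set S₂ := c.primeFactors.filter fun p => ¬ c.factorization p = 1
  have hsplit : ∏ p ∈ c.primeFactors, f p = (∏ p ∈ S₁, f p) * ∏ p ∈ S₂, f p :=
    (Finset.prod_filter_mul_prod_filter_not _ _ _).symm
  have hS₁ : ∏ p ∈ S₁, f p ≤
      K * (c : ℝ) ^ ((1 : ℝ) / 2 + ε) * (Int.gcd (c : ℤ) D : ℝ) ^ ((1 : ℝ) / 2) := by
    have h1 : ∏ p ∈ S₁, f p ≤ ∏ p ∈ S₁, (C₀ * (p : ℝ) ^ (1 / 2 : ℝ) *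
        (Int.gcd (p : ℤ) D : ℝ) ^ (1 / 2 : ℝ)) := by
      refine Finset.prod_le_prod (fun _ _ => abs_nonneg _) fun p hp => ?_
      obtain ⟨hp, hp1⟩ := Finset.mem_filter.mp hp
      have := hprime p b a (Nat.prime_of_mem_primeFactors hp) (hpb p hp)
      simp only [f, hp1, pow_one]
      push_cast at this ⊢
      exact this
    have h2 : ∏ p ∈ S₁, p ≤ c :=
      Nat.le_of_dvd hc ((Finset.prod_dvd_prod_of_subset _ _ _ (Finset.filter_subset _ _)).trans
        (Nat.prod_primeFactors_dvd c))
    have h3 : ∏ p ∈ S₁, Int.gcd (p : ℤ) D ≤ Int.gcd (c : ℤ) D := by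
      refine Nat.le_of_dvd (Int.gcd_pos_of_ne_zero_left _ (by exact_mod_cast hc.ne')) ?_
      refine Finset.prod_dvd_of_isRelPrime ?_ fun p hp => ?_
      · intro p hp r hr hpr
        have hp := Nat.prime_of_mem_primeFactors (Finset.mem_filter.mp hp).1
        have hr := Nat.prime_of_mem_primeFactors (Finset.mem_filter.mp hr).1
        refine Nat.coprime_iff_isRelPrime.mp ?_
        exact Nat.Coprime.of_dvd (Nat.gcd_dvd_left _ _) (Nat.gcd_dvd_left _ _)
          ((Nat.coprime_primes hp hr).mpr hpr)
      · exact Nat.gcd_dvd_gcd_of_dvd_left _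
          (Nat.dvd_of_mem_primeFactors (Finset.mem_filter.mp hp).1)
    have h2' : ∏ p ∈ S₁, (p : ℝ) ≤ c := by rw [← Nat.cast_prod]; exact_mod_cast h2
    have h3' : ∏ p ∈ S₁, (Int.gcd (p : ℤ) D : ℝ) ≤ Int.gcd (c : ℤ) D := by
      rw [← Nat.cast_prod]; exact_mod_cast h3
    have h4 : C₀ ^ S₁.card ≤ K * (c : ℝ) ^ ε :=
      (pow_le_pow_right₀ hC₀ (Finset.card_le_card (Finset.filter_subset _ _))).trans (hcard c hc)
    calc ∏ p ∈ S₁, f p ≤ _ := h1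
      _ = C₀ ^ S₁.card * (∏ p ∈ S₁, (p : ℝ)) ^ (1 / 2 : ℝ) *
          (∏ p ∈ S₁, (Int.gcd (p : ℤ) D : ℝ)) ^ (1 / 2 : ℝ) := by
        rw [Finset.prod_mul_distrib, Finset.prod_mul_distrib, Finset.prod_const,
          Real.finsetProd_rpow _ _ (fun _ _ => by positivity),
          Real.finsetProd_rpow _ _ (fun _ _ => by positivity)]
      _ ≤ (K * (c : ℝ) ^ ε) * (c : ℝ) ^ (1 / 2 : ℝ) *
          (Int.gcd (c : ℤ) D : ℝ) ^ (1 / 2 : ℝ) := by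
        gcongr
      _ = _ := by
        rw [Real.rpow_add (by exact_mod_cast hc)]
        ring
  have hS₂ : ∏ p ∈ S₂, f p ≤ (q : ℝ) ^ (2 * δ * (m : ℝ)) := by
    -- `0 ≤ ν ≤ P^m` and `0 ≤ P ≤ P^m` for the prime power `P = p^e`, so `|ν - P| ≤ P^m`
    have h1 : ∏ p ∈ S₂, f p ≤ ∏ p ∈ S₂, ((p ^ q.factorization p : ℕ) : ℝ) ^ m := by
      refine Finset.prod_le_prod (fun _ _ => abs_nonneg _) fun p hp => ?_
      obtain ⟨hp, _⟩ := Finset.mem_filter.mp hp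
      have hpos : 0 < p ^ q.factorization p := pow_pos (Nat.prime_of_mem_primeFactors hp).pos _
      have hle := Stepanov.nuCount_le (d := d) hpos b a
      have hle2 : p ^ q.factorization p ≤ (p ^ q.factorization p) ^ m :=
        Nat.le_self_pow (by omega) _
      simp only [f, hfac p hp]
      rw [← Int.cast_abs]
      have : |((nuCount m d b (p ^ q.factorization p) a : ℤ) - (p : ℤ) ^ q.factorization p)| ≤
          (((p ^ q.factorization p) ^ m : ℕ) : ℤ) := by
        rw [← Nat.cast_pow, abs_le]
        constructor <;> omega
      exact_mod_cast this
    have h2 := Stepanov.prod_squarefull_le hqt hv hqv S₂ fun p hp => by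
      obtain ⟨hp, hp1⟩ := Finset.mem_filter.mp hp
      have := hfac1 p hp
      exact ⟨Nat.prime_of_mem_primeFactors hp, by rw [← hfac p hp]; omega⟩
    have h2' : ∏ p ∈ S₂, ((p ^ q.factorization p : ℕ) : ℝ) ≤ (v : ℝ) ^ 3 := by
      rw [← Nat.cast_prod]; exact_mod_cast h2
    have hqpos : (0 : ℝ) < q := by exact_mod_cast hq
    have hv1 : (1 : ℝ) ≤ v := by exact_mod_cast hv
    -- `v² = q / q̃ ≤ q / q^(1-δ) = q^δ`
    have hvq : (v : ℝ) ^ 2 ≤ (q : ℝ) ^ δ := by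
      have e1 : (q : ℝ) ^ (1 - δ) * (v : ℝ) ^ 2 ≤ q := by
        calc (q : ℝ) ^ (1 - δ) * (v : ℝ) ^ 2 ≤ (qt : ℝ) * (v : ℝ) ^ 2 := by gcongr
          _ = (q : ℝ) := by rw [hqv]; push_cast; ring
      have e2 : (q : ℝ) ^ (1 - δ) * (q : ℝ) ^ δ = q := by
        rw [← Real.rpow_add hqpos, sub_add_cancel, Real.rpow_one]
      exact le_of_mul_le_mul_left (e1.trans_eq e2.symm) (by positivity)
    calc ∏ p ∈ S₂, f p ≤ _ := h1
      _ = (∏ p ∈ S₂, ((p ^ q.factorization p : ℕ) : ℝ)) ^ m := Finset.prod_pow _ _ _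
      _ ≤ ((v : ℝ) ^ 3) ^ m := by gcongr
      _ ≤ ((v : ℝ) ^ 4) ^ m := by gcongr; norm_num
      _ = ((v : ℝ) ^ 2) ^ (2 * m) := by rw [← pow_mul, ← pow_mul]; congr 1; ring
      _ ≤ ((q : ℝ) ^ δ) ^ (2 * m) := by gcongr
      _ = (q : ℝ) ^ (2 * δ * (m : ℝ)) := by
        rw [← Real.rpow_natCast, ← Real.rpow_mul hqpos.le]
        congr 1
        push_cast
        ring
  rw [hA, hsplit]
  exact mul_le_mul hS₁ hS₂ (Finset.prod_nonneg fun _ _ => abs_nonneg _) (by positivity)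
end
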